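/- arXiv:2403.00120 — 2 statements merged into one kernel-verified Lean document; each statement's English description precedes it below -/
import Mathlib

section
/- Let q be a prime power, F = F_q(X), j ≥ 1, and a ≥ 0. Among two-dimensional subspaces V ⊂ F^3 of height 2j, the proportion ν_j(a) of those with first successive minimum μ_1(V) = j - a equals: 0 if a > j; q^{-2a+1} if a = j; q^{-2a}(q - q^{-1}) if 0 < a < j; and q^{-2a}(1 - q^{-1}) if a = 0. -/
open Polynomial

/-- A nonzero vector of `𝔽_q(X)³` has height `l` if, after scaling to a coprime triple of
polynomials, the maximum of their degrees is `l`. -/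
def VecHeight {F : Type*} [Field F] (v : Fin 3 → RatFunc F) (l : ℕ) : Prop :=
  ∃ (c : RatFunc F) (A : Fin 3 → Polynomial F), c ≠ 0 ∧
    (∀ d : Polynomial F, (∀ i, d ∣ A i) → IsUnit d) ∧
    (∀ i, v i = c * algebraMap (Polynomial F) (RatFunc F) (A i)) ∧
    (Finset.univ.sup fun i => (A i).degree) = (l : WithBot ℕ)

/-- `V` is a two-dimensional subspace of `𝔽_q(X)³` of height `m`: its one-dimensional
orthogonal complement is spanned by a coprime polynomial triple of maximal degree `m`. -/
def TwoDimOfHeight {F : Type*} [Field F]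
    (V : Submodule (RatFunc F) (Fin 3 → RatFunc F)) (m : ℕ) : Prop :=
  Module.finrank (RatFunc F) V = 2 ∧
  ∃ B : Fin 3 → Polynomial F,
    (∀ d : Polynomial F, (∀ i, d ∣ B i) → IsUnit d) ∧
    (Finset.univ.sup fun i => (B i).degree) = (m : WithBot ℕ) ∧
    ∀ v ∈ V, ∑ i, algebraMap (Polynomial F) (RatFunc F) (B i) * v i = 0

/-- `μ₁(V) = μ`: the least height of a nonzero vector of `V`. -/
def FirstMinimum {F : Type*} [Field F]
    (V : Submodule (RatFunc F) (Fin 3 → RatFunc F)) (μ : ℕ) : Prop :=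
  IsLeast {l : ℕ | ∃ v ∈ V, v ≠ 0 ∧ VecHeight v l} μ

/-!
A plane `V` is the orthogonal complement of a coprime triple `B`, unique up to units. If `A` and
`A'` are orthogonal to `B`, their cross product is a multiple of `B`, so it vanishes once
`deg A + deg A' < deg B`. Hence, for `2l < m`, a plane of height `m` with first minimum `l` contains
a unique coprime triple of height `l` up to units, and double counting the pairs `(A, B)` reduces
the number of such planes to the number of coprime triples of given height in `F[X]³` and in `A^⊥`.
Dividing out the monic content reduces the latter to counting all triples of bounded degree, which
is linear algebra over `F`: for coprime `A` of height `l ≤ n`, the dot product with `A` maps the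
triples of degree `< n` onto the polynomials of degree `< l + n`.

By the pigeonhole principle `μ₁(V) ≤ m / 2`, so the case `m = 2l` is the complement of the others.
-/

open Module
open scoped Matrix

section CoprimeTuples

variable {ι R : Type*} [CommRing R]

/-- A tuple is coprime when its entries have no common divisor besides the units; this is the
normalization that `VecHeight` and `TwoDimOfHeight` impose on polynomial triples. -/
def IsCoprimeTuple (A : ι → R) : Prop :=
  ∀ d : R, (∀ i, d ∣ A i) → IsUnit d

namespace IsCoprimeTuple

theorem ne_zero [Nontrivial R] {A : ι → R} (hA : IsCoprimeTuple A) : A ≠ 0 := by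
  rintro rfl
  exact not_isUnit_zero (hA 0 fun _ => dvd_zero _)

theorem units_smul {A : ι → R} (hA : IsCoprimeTuple A) (u : Rˣ) : IsCoprimeTuple (u • A) :=
  fun d hd => hA d fun i => Units.dvd_mul_left.1 (hd i)

theorem isUnit_of_smul {A : ι → R} {c : R} (h : IsCoprimeTuple (c • A)) : IsUnit c :=
  h c fun i => dvd_mul_right c (A i)

variable [IsPrincipalIdealRing R]

theorem span_range_eq_top {A : ι → R} (hA : IsCoprimeTuple A) : Ideal.span (Set.range A) = ⊤ := by
  obtain ⟨g, hg⟩ : ∃ g, Ideal.span (Set.range A) = Ideal.span {g} :=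
    (IsPrincipalIdealRing.principal _).principal
  have hgA (i : ι) : g ∣ A i :=
    Ideal.mem_span_singleton.1 (hg ▸ Ideal.subset_span (Set.mem_range_self i))
  exact hg.trans (Ideal.span_singleton_eq_top.2 (hA g hgA))

theorem exists_dotProduct_eq_one [Fintype ι] {A : ι → R} (hA : IsCoprimeTuple A) :
    ∃ u : ι → R, A ⬝ᵥ u = 1 := by
  obtain ⟨u, hu⟩ := Ideal.mem_span_range_iff_exists_fun.1
    (hA.span_range_eq_top ▸ Submodule.mem_top (x := 1))
  exact ⟨u, (dotProduct_comm A u).trans hu⟩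

theorem dvd_of_smul_eq_smul {A B : ι → R} {g h : R} (hA : IsCoprimeTuple A)
    (hAB : g • A = h • B) : h ∣ g := by
  have h_le : Ideal.span (Set.range A) ≤
      Submodule.comap (LinearMap.mulLeft R g) (Ideal.span {h}) := by
    rw [Ideal.span_le]
    rintro _ ⟨i, rfl⟩
    exact Ideal.mem_span_singleton.2 ⟨B i, congrFun hAB i⟩
  have h_one := h_le (hA.span_range_eq_top ▸ Submodule.mem_top (x := 1))
  simpa [Ideal.mem_span_singleton] using h_one

end IsCoprimeTuple

theorem exists_isCoprimeTuple_eq_smul [IsDomain R] {A : ι → R} {g : R} (hg : g ≠ 0)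
    (h_span : Ideal.span (Set.range A) = Ideal.span {g}) :
    ∃ A' : ι → R, IsCoprimeTuple A' ∧ A = g • A' := by
  have hgA (i : ι) : g ∣ A i :=
    Ideal.mem_span_singleton.1 (h_span ▸ Ideal.subset_span (Set.mem_range_self i))
  choose A' hA' using hgA
  refine ⟨A', fun d hd => ?_, funext hA'⟩
  have h_le : Ideal.span (Set.range A) ≤ Ideal.span {g * d} := by
    rw [Ideal.span_le]
    rintro _ ⟨i, rfl⟩
    exact Ideal.mem_span_singleton.2 (hA' i ▸ mul_dvd_mul_left g (hd i))
  have h_dvd : g * d ∣ g * 1 := by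
    simpa using Ideal.mem_span_singleton.1 (h_le (h_span ▸ Ideal.mem_span_singleton_self g))
  exact isUnit_of_dvd_one ((mul_dvd_mul_iff_left hg).1 h_dvd)

namespace IsCoprimeTuple

variable [IsPrincipalIdealRing R]

theorem exists_eq_smul_of_crossProduct_eq_zero {A B : Fin 3 → R} (hA : IsCoprimeTuple A)
    (h : A ⨯₃ B = 0) : ∃ c : R, B = c • A := by
  obtain ⟨u, hu⟩ := hA.exists_dotProduct_eq_one
  have h_cross := cross_cross_eq_smul_sub_smul A B u
  rw [h, hu, one_smul, map_zero, LinearMap.zero_apply] at h_cross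
  exact ⟨B ⬝ᵥ u, (sub_eq_zero.1 h_cross.symm)⟩

theorem mem_orbit_of_crossProduct_eq_zero {A B : Fin 3 → R} (hA : IsCoprimeTuple A)
    (hB : IsCoprimeTuple B) (h : A ⨯₃ B = 0) : B ∈ MulAction.orbit Rˣ A := by
  obtain ⟨c, rfl⟩ := hA.exists_eq_smul_of_crossProduct_eq_zero h
  exact ⟨hB.isUnit_of_smul.unit, rfl⟩

end IsCoprimeTuple

/-- The submodule of tuples whose dot product with `A` vanishes. -/
def dotOrthogonal [Fintype ι] (A : ι → R) : Submodule R (ι → R) :=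
  LinearMap.ker (dotProductBilin R R A)

theorem mem_dotOrthogonal [Fintype ι] {A B : ι → R} : B ∈ dotOrthogonal A ↔ A ⬝ᵥ B = 0 :=
  Iff.rfl

theorem mem_dotOrthogonal_comm [Fintype ι] {A B : ι → R} :
    B ∈ dotOrthogonal A ↔ A ∈ dotOrthogonal B := by
  rw [mem_dotOrthogonal, mem_dotOrthogonal, dotProduct_comm]

theorem mem_dotOrthogonal_of_smul_mem [Fintype ι] [IsDomain R] {A B : ι → R} {g : R} (hg : g ≠ 0)
    (h : g • B ∈ dotOrthogonal A) : B ∈ dotOrthogonal A := by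
  rw [mem_dotOrthogonal, dotProduct_smul] at h
  exact (smul_eq_zero.1 h).resolve_left hg

theorem dotOrthogonal_smul [Fintype ι] [IsDomain R] {c : R} (hc : c ≠ 0) (A : ι → R) :
    dotOrthogonal (c • A) = dotOrthogonal A := by
  ext B
  rw [mem_dotOrthogonal, mem_dotOrthogonal, smul_dotProduct, smul_eq_zero_iff_right hc]

theorem finrank_dotOrthogonal {K : Type*} [Field K] [Fintype ι] {v : ι → K} (hv : v ≠ 0) :
    finrank K (dotOrthogonal v) + 1 = Fintype.card ι := by
  have h_ne : dotProductBilin K K v ≠ 0 := fun h =>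
    hv (dotProduct_eq_zero v fun w => LinearMap.congr_fun h w)
  rw [dotOrthogonal, Module.Dual.finrank_ker_add_one_of_ne_zero h_ne, finrank_fintype_fun_eq_card]

end CoprimeTuples

section TupleDegree

variable {ι R : Type*} [Fintype ι] [Semiring R]

/-- The degree of a polynomial tuple: the maximal degree of its entries, `⊥` for the zero tuple. It
is the height of the tuple when the tuple is coprime. -/
def tupleDegree (A : ι → R[X]) : WithBot ℕ :=
  Finset.univ.sup fun i => (A i).degree

theorem degree_le_tupleDegree (A : ι → R[X]) (i : ι) : (A i).degree ≤ tupleDegree A :=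
  Finset.le_sup (f := fun i => (A i).degree) (Finset.mem_univ i)

theorem exists_degree_eq_tupleDegree [Nonempty ι] (A : ι → R[X]) :
    ∃ i, (A i).degree = tupleDegree A := by
  obtain ⟨i, -, hi⟩ := Finset.exists_mem_eq_sup Finset.univ Finset.univ_nonempty
    fun i => (A i).degree
  exact ⟨i, hi.symm⟩

theorem tupleDegree_lt_iff {A : ι → R[X]} {n : ℕ} :
    tupleDegree A < n ↔ ∀ i, A i ∈ degreeLT R n := by
  simp [tupleDegree, mem_degreeLT]

theorem tupleDegree_lt_add_one_iff {A : ι → R[X]} {n : ℕ} :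
    tupleDegree A < ((n + 1 : ℕ) : WithBot ℕ) ↔ tupleDegree A ≤ n := by
  cases tupleDegree A with
  | bot => simp
  | coe m => exact (WithBot.coe_lt_coe.trans Nat.lt_succ_iff).trans WithBot.coe_le_coe.symm

theorem tupleDegree_eq_bot_iff {A : ι → R[X]} : tupleDegree A = ⊥ ↔ A = 0 := by
  simp [tupleDegree, Finset.sup_eq_bot_iff, funext_iff]

theorem exists_tupleDegree_eq_natCast {A : ι → R[X]} (hA : A ≠ 0) :
    ∃ n : ℕ, tupleDegree A = n := by
  obtain ⟨n, hn⟩ := WithBot.ne_bot_iff_exists.1 (mt tupleDegree_eq_bot_iff.1 hA)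
  exact ⟨n, hn.symm⟩

theorem tupleDegree_smul [NoZeroDivisors R] (g : R[X]) (A : ι → R[X]) :
    tupleDegree (g • A) = g.degree + tupleDegree A := by
  have h_mono : Monotone fun d : WithBot ℕ => g.degree + d := fun _ _ h => by dsimp only; gcongr
  simp only [tupleDegree, Pi.smul_apply, smul_eq_mul, degree_mul]
  exact (Finset.apply_sup_eq_sup_comp_of_linearOrder _ h_mono (WithBot.add_bot _)).symm

theorem tupleDegree_units_smul {R : Type*} [CommRing R] [IsDomain R] (u : R[X]ˣ) (A : ι → R[X]) :
    tupleDegree (u • A) = tupleDegree A := by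
  rw [Units.smul_def, tupleDegree_smul, degree_coe_units, zero_add]

theorem tupleDegree_crossProduct_le {R : Type*} [CommRing R] (A B : Fin 3 → R[X]) :
    tupleDegree (A ⨯₃ B) ≤ tupleDegree A + tupleDegree B := by
  have h_mul (i j : Fin 3) : (A i * B j).degree ≤ tupleDegree A + tupleDegree B :=
    (degree_mul_le _ _).trans
      (add_le_add (degree_le_tupleDegree A i) (degree_le_tupleDegree B j))
  have h_sub (i j k l : Fin 3) :
      (A i * B j - A k * B l).degree ≤ tupleDegree A + tupleDegree B :=
    (degree_sub_le _ _).trans (max_le (h_mul i j) (h_mul k l))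
  refine Finset.sup_le fun i _ => ?_
  rw [cross_apply]
  fin_cases i <;> exact h_sub _ _ _ _

theorem crossProduct_eq_zero_of_tupleDegree_add_lt {F : Type*} [Field F] {A A' B : Fin 3 → F[X]}
    (hB : IsCoprimeTuple B) (hA : A ∈ dotOrthogonal B) (hA' : A' ∈ dotOrthogonal B)
    (h : tupleDegree A + tupleDegree A' < tupleDegree B) : A ⨯₃ A' = 0 := by
  have h_cross : B ⨯₃ (A ⨯₃ A') = 0 := by
    rw [cross_cross_eq_smul_sub_smul', dotProduct_comm A B, mem_dotOrthogonal.1 hA,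
      mem_dotOrthogonal.1 hA', zero_smul, zero_smul, sub_zero]
  obtain ⟨c, hc⟩ := hB.exists_eq_smul_of_crossProduct_eq_zero h_cross
  suffices c = 0 by rw [hc, this, zero_smul]
  by_contra hc0
  have h_le : tupleDegree B ≤ tupleDegree (A ⨯₃ A') := by
    rw [hc, tupleDegree_smul]
    exact le_add_of_nonneg_left (zero_le_degree_iff.2 hc0)
  exact (h.trans_le (h_le.trans (tupleDegree_crossProduct_le A A'))).false

end TupleDegree

section MonicContent

variable {F ι : Type*} [Field F]

theorem exists_monic_smul_isCoprimeTuple {A : ι → F[X]} (hA : A ≠ 0) :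
    ∃ (g : F[X]) (A' : ι → F[X]), g.Monic ∧ IsCoprimeTuple A' ∧ A = g • A' := by
  classical
  obtain ⟨g, hg⟩ : ∃ g, Ideal.span (Set.range A) = Ideal.span {g} :=
    (IsPrincipalIdealRing.principal _).principal
  have hg0 : g ≠ 0 := by
    rintro rfl
    rw [Ideal.span_singleton_zero, Ideal.span_eq_bot] at hg
    exact hA (funext fun i => hg _ (Set.mem_range_self i))
  rw [← Ideal.span_singleton_eq_span_singleton.2 (normalize_associated g)] at hg
  obtain ⟨A', hA', h⟩ := exists_isCoprimeTuple_eq_smul (mt normalize_eq_zero.1 hg0) hg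
  exact ⟨normalize g, A', monic_normalize hg0, hA', h⟩

theorem IsCoprimeTuple.eq_of_monic_smul_eq_smul {A A' : ι → F[X]} {g g' : F[X]}
    (hA : IsCoprimeTuple A) (hA' : IsCoprimeTuple A') (hg : g.Monic) (hg' : g'.Monic)
    (h : g • A = g' • A') : g = g' ∧ A = A' := by
  obtain rfl : g = g' := eq_of_monic_of_associated hg hg'
    (associated_of_dvd_dvd (hA'.dvd_of_smul_eq_smul h.symm) (hA.dvd_of_smul_eq_smul h))
  exact ⟨rfl, smul_right_injective _ hg.ne_zero h⟩

end MonicContent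

section BoundedTuples

variable {F ι : Type*} [Field F] [Fintype ι]

theorem finrank_degreeLT (n : ℕ) : finrank F (degreeLT F n) = n := by
  rw [(degreeLTEquiv F n).finrank_eq, finrank_fin_fun]

/-- The dot product with `A` as an `F`-linear map on tuples of polynomials of degree `< n`. -/
noncomputable def dotBelow (A : ι → F[X]) (n : ℕ) : (ι → degreeLT F n) →ₗ[F] F[X] :=
  dotProductBilin F F A ∘ₗ (degreeLT F n).subtype.compLeft ι

theorem range_dotBelow_le {A : ι → F[X]} {l n : ℕ} (hA : tupleDegree A ≤ l) :
    LinearMap.range (dotBelow A n) ≤ degreeLT F (l + n) := by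
  rintro _ ⟨B, rfl⟩
  refine Submodule.sum_mem _ fun i _ => mem_degreeLT.2 ?_
  rw [degree_mul, Nat.cast_add]
  calc (A i).degree + (B i : F[X]).degree
      ≤ l + (B i : F[X]).degree := by gcongr; exact (degree_le_tupleDegree A i).trans hA
    _ < l + n := WithBot.add_lt_add_left WithBot.coe_ne_bot (mem_degreeLT.1 (B i).2)

theorem exists_dotProduct_eq_zero_of_lt {A : ι → F[X]} {l n : ℕ} (hA : tupleDegree A ≤ l)
    (h : l + n < Fintype.card ι * n) :
    ∃ B : ι → F[X], B ≠ 0 ∧ tupleDegree B < n ∧ A ⬝ᵥ B = 0 := by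
  have h_rank := (dotBelow A n).finrank_range_add_finrank_ker
  have h_range := Submodule.finrank_mono (range_dotBelow_le (n := n) hA)
  rw [finrank_pi_fintype, Finset.sum_const, Finset.card_univ, finrank_degreeLT, smul_eq_mul]
    at h_rank
  rw [finrank_degreeLT] at h_range
  have h_ker : LinearMap.ker (dotBelow A n) ≠ ⊥ := Submodule.one_le_finrank_iff.1 (by omega)
  obtain ⟨B, hB, hB0⟩ := Submodule.exists_mem_ne_zero_of_ne_bot h_ker
  exact ⟨fun i => B i, fun h0 => hB0 (funext fun i => Subtype.ext (congrFun h0 i)),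
    tupleDegree_lt_iff.2 fun i => (B i).2, hB⟩

/-- Reduce a solution of `A ⬝ᵥ u = c` modulo an entry `A k` of maximal degree; the remaining
multiple of `A k` has a quotient of degree `< n`. -/
theorem IsCoprimeTuple.exists_dotProduct_eq {A : ι → F[X]} {l n : ℕ} (hA : IsCoprimeTuple A)
    (hl : tupleDegree A = l) (hn : l ≤ n) {c : F[X]} (hc : c ∈ degreeLT F (l + n)) :
    ∃ B : ι → F[X], tupleDegree B < n ∧ A ⬝ᵥ B = c := by
  classical
  have : Nonempty ι := by
    by_contra h
    rw [not_nonempty_iff] at h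
    exact hA.ne_zero (Subsingleton.elim _ _)
  obtain ⟨k, hk⟩ := exists_degree_eq_tupleDegree A
  have hAk : A k ≠ 0 := fun h => by simp [h, hl] at hk
  obtain ⟨u, hu⟩ := hA.exists_dotProduct_eq_one
  set R : ι → F[X] := fun i => (c * u i) % A k
  have hR : tupleDegree R < l :=
    tupleDegree_lt_iff.2 fun i => mem_degreeLT.2 ((EuclideanDomain.mod_lt _ hAk).trans_eq
      (hk.trans hl))
  obtain ⟨s, hs⟩ : A k ∣ c - A ⬝ᵥ R := by
    have h_dot : A ⬝ᵥ (fun i => c * u i) = c := by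
      rw [show (fun i => c * u i) = c • u from rfl, dotProduct_smul, hu, smul_eq_mul, mul_one]
    rw [show c - A ⬝ᵥ R = A ⬝ᵥ ((fun i => c * u i) - R) by rw [dotProduct_sub, h_dot]]
    refine Finset.dvd_sum fun i _ => Dvd.dvd.mul_left ⟨c * u i / A k, ?_⟩ _
    exact sub_eq_of_eq_add' (EuclideanDomain.mod_add_div _ _).symm
  have hs_mem : s ∈ degreeLT F n := by
    have hAR : A ⬝ᵥ R ∈ degreeLT F (l + n) :=
      degreeLT_mono (by omega) (range_dotBelow_le (n := l) hl.le
        ⟨fun i => ⟨R i, tupleDegree_lt_iff.1 hR i⟩, rfl⟩)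
    have h_mul := mem_degreeLT.1 (hs ▸ sub_mem hc hAR)
    rw [degree_mul, hk, hl, Nat.cast_add] at h_mul
    exact mem_degreeLT.2 ((WithBot.add_lt_add_iff_left WithBot.coe_ne_bot).1 h_mul)
  refine ⟨R + Pi.single k s, tupleDegree_lt_iff.2 fun i => ?_, ?_⟩
  · rw [Pi.add_apply]
    refine add_mem (tupleDegree_lt_iff.1 (hR.trans_le (by exact_mod_cast hn)) i) ?_
    rcases eq_or_ne i k with rfl | hik
    · rwa [Pi.single_eq_same]
    · rw [Pi.single_eq_of_ne hik]
      exact zero_mem _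
  · rw [dotProduct_add, dotProduct_single, ← hs, add_sub_cancel]

theorem IsCoprimeTuple.finrank_ker_dotBelow {A : ι → F[X]} {l n : ℕ} (hA : IsCoprimeTuple A)
    (hl : tupleDegree A = l) (hn : l ≤ n) :
    (l + n) + finrank F (LinearMap.ker (dotBelow A n)) = Fintype.card ι * n := by
  have h_range : LinearMap.range (dotBelow A n) = degreeLT F (l + n) := by
    refine le_antisymm (range_dotBelow_le hl.le) fun c hc => ?_
    obtain ⟨B, hB, rfl⟩ := hA.exists_dotProduct_eq hl hn hc
    exact ⟨fun i => ⟨B i, tupleDegree_lt_iff.1 hB i⟩, rfl⟩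
  have h_rank := (dotBelow A n).finrank_range_add_finrank_ker
  rwa [h_range, finrank_degreeLT, finrank_pi_fintype, Finset.sum_const, Finset.card_univ,
    finrank_degreeLT, smul_eq_mul] at h_rank

end BoundedTuples

section DoubleCounting

variable {α β : Type*}

theorem ncard_biUnion_finset {t : Finset α} {s : α → Set β} (hs : ∀ i ∈ t, (s i).Finite)
    (h : (t : Set α).PairwiseDisjoint s) : (⋃ i ∈ t, s i).ncard = ∑ i ∈ t, (s i).ncard := by
  rw [← finsum_mem_coe_finset, ← Set.Finite.ncard_biUnion t.finite_toSet hs h]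
  simp only [Finset.mem_coe]

theorem ncard_mul_eq_ncard_mul {s : Set α} {t : Set β} (hs : s.Finite) (ht : t.Finite)
    (r : α → β → Prop) {m n : ℚ} (hm : ∀ a ∈ s, ({b ∈ t | r a b}.ncard : ℚ) = m)
    (hn : ∀ b ∈ t, ({a ∈ s | r a b}.ncard : ℚ) = n) : (s.ncard : ℚ) * m = t.ncard * n := by
  classical
  lift s to Finset α using hs
  lift t to Finset β using ht
  have h_above : ∀ a ∈ s, ((t.bipartiteAbove r a).card : ℚ) = m := fun a ha => by
    rw [← hm a ha, ← Set.ncard_coe_finset, Finset.coe_bipartiteAbove]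
    rfl
  have h_below : ∀ b ∈ t, ((s.bipartiteBelow r b).card : ℚ) = n := fun b hb => by
    rw [← hn b hb, ← Set.ncard_coe_finset, Finset.coe_bipartiteBelow]
    rfl
  have h := congrArg (Nat.cast (R := ℚ))
    (Finset.sum_card_bipartiteAbove_eq_sum_card_bipartiteBelow (s := s) (t := t) r)
  push_cast at h
  rwa [Finset.sum_congr rfl h_above, Finset.sum_congr rfl h_below, Finset.sum_const,
    Finset.sum_const, nsmul_eq_mul, nsmul_eq_mul, ← Set.ncard_coe_finset,
    ← Set.ncard_coe_finset] at h

end DoubleCounting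

section LatticeCounting

open Finset.HasAntidiagonal

variable {F ι : Type*} [Field F] [Fintype ι]

/-- The tuples of degree `< n` in a lattice `W` of polynomial tuples. -/
def tuplesBelow (W : Submodule F[X] (ι → F[X])) (n : ℕ) : Set (ι → F[X]) :=
  {B | B ∈ W ∧ tupleDegree B < n}

/-- The tuples of degree exactly `n` in a lattice `W` of polynomial tuples. -/
def tuplesOfDegree (W : Submodule F[X] (ι → F[X])) (n : ℕ) : Set (ι → F[X]) :=
  {B | B ∈ W ∧ tupleDegree B = n}

/-- The coprime tuples of height exactly `n` in a lattice `W` of polynomial tuples. -/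
def coprimeTuples (W : Submodule F[X] (ι → F[X])) (n : ℕ) : Set (ι → F[X]) :=
  {B | B ∈ W ∧ IsCoprimeTuple B ∧ tupleDegree B = n}

theorem tuplesBelow_succ (W : Submodule F[X] (ι → F[X])) (n : ℕ) :
    tuplesBelow W (n + 1) = tuplesBelow W n ∪ tuplesOfDegree W n := by
  ext B
  simp only [tuplesBelow, tuplesOfDegree, Set.mem_union, Set.mem_ofPred_eq, ← and_or_left,
    ← le_iff_lt_or_eq, tupleDegree_lt_add_one_iff]

theorem tuplesBelow_eq_image (W : Submodule F[X] (ι → F[X])) (n : ℕ) :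
    tuplesBelow W n = (degreeLT F n).subtype.compLeft ι ''
      {B | (degreeLT F n).subtype.compLeft ι B ∈ W} := by
  ext B
  constructor
  · rintro ⟨hB, hn⟩
    exact ⟨fun i => ⟨B i, tupleDegree_lt_iff.1 hn i⟩, hB, rfl⟩
  · rintro ⟨B, hB, rfl⟩
    exact ⟨hB, tupleDegree_lt_iff.2 fun i => (B i).2⟩

theorem ncard_tuplesBelow (W : Submodule F[X] (ι → F[X])) (n : ℕ) :
    (tuplesBelow W n).ncard =
      {B : ι → degreeLT F n | (degreeLT F n).subtype.compLeft ι B ∈ W}.ncard := by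
  rw [tuplesBelow_eq_image]
  exact Set.ncard_image_of_injective _ fun B B' h =>
    funext fun i => Subtype.ext (congrFun h i)

theorem natCard_degreeLT (n : ℕ) : Nat.card (degreeLT F n) = Nat.card F ^ n := by
  rw [Module.natCard_eq_pow_finrank (K := F), finrank_degreeLT]

theorem ncard_monic_degree_eq (n : ℕ) :
    {g : F[X] | g.Monic ∧ g.natDegree = n}.ncard = Nat.card F ^ n := by
  rw [← Nat.card_coe_set_eq, ← natCard_degreeLT]
  exact Nat.card_congr (monicEquivDegreeLT n)

theorem ncard_tuplesBelow_top (n : ℕ) :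
    (tuplesBelow (⊤ : Submodule F[X] (ι → F[X])) n).ncard = Nat.card F ^ (Fintype.card ι * n) := by
  rw [ncard_tuplesBelow]
  simp [Set.ncard_univ, Nat.card_fun, natCard_degreeLT, ← pow_mul, mul_comm]

theorem IsCoprimeTuple.ncard_tuplesBelow_dotOrthogonal_mul {A : ι → F[X]} {l r n : ℕ}
    (hA : IsCoprimeTuple A) (hl : tupleDegree A = l) (hr : Fintype.card ι = r + 1) (hn : l ≤ n) :
    (tuplesBelow (dotOrthogonal A) n).ncard * Nat.card F ^ l = Nat.card F ^ (r * n) := by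
  have h_ker : (tuplesBelow (dotOrthogonal A) n).ncard =
      Nat.card (LinearMap.ker (dotBelow A n)) :=
    ncard_tuplesBelow _ _
  have h_rank := hA.finrank_ker_dotBelow hl hn
  rw [hr] at h_rank
  rw [h_ker, Module.natCard_eq_pow_finrank (K := F), ← pow_add]
  congr 1
  linarith

/-- Pairs of a monic polynomial and a coprime tuple of `W`, of degrees `p.1` and `p.2`. -/
def factoredTuples (W : Submodule F[X] (ι → F[X])) (p : ℕ × ℕ) : Set (F[X] × (ι → F[X])) :=
  {g | g.Monic ∧ g.natDegree = p.1} ×ˢ coprimeTuples W p.2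

theorem bijOn_smul_factoredTuples {W : Submodule F[X] (ι → F[X])}
    (hW : ∀ {g : F[X]} {B : ι → F[X]}, g ≠ 0 → g • B ∈ W → B ∈ W) (n : ℕ) :
    Set.BijOn (fun x => x.1 • x.2) (⋃ p ∈ antidiagonal n, factoredTuples W p)
      (tuplesOfDegree W n) := by
  simp only [factoredTuples]
  refine ⟨?_, ?_, ?_⟩
  · simp only [Set.mapsTo_iUnion, mem_antidiagonal]
    rintro ⟨k, l⟩ rfl ⟨g, A⟩ ⟨⟨hg, rfl⟩, hAW, -, hA⟩
    refine ⟨W.smul_mem g hAW, ?_⟩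
    dsimp only at hA ⊢
    rw [tupleDegree_smul, hA, degree_eq_natDegree hg.ne_zero, Nat.cast_add]
  · rintro ⟨g, A⟩ hx ⟨g', A'⟩ hx' h
    simp only [Set.mem_iUnion] at hx hx'
    obtain ⟨-, -, ⟨hg, -⟩, -, hA, -⟩ := hx
    obtain ⟨-, -, ⟨hg', -⟩, -, hA', -⟩ := hx'
    exact Prod.ext_iff.2 (hA.eq_of_monic_smul_eq_smul hA' hg hg' h)
  · rintro B ⟨hBW, hB⟩
    obtain ⟨g, A, hg, hA, rfl⟩ := exists_monic_smul_isCoprimeTuple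
      (A := B) fun h => WithBot.coe_ne_bot (hB.symm.trans (tupleDegree_eq_bot_iff.2 h))
    obtain ⟨l, hl⟩ := exists_tupleDegree_eq_natCast hA.ne_zero
    rw [tupleDegree_smul, hl, degree_eq_natDegree hg.ne_zero] at hB
    simp only [Set.mem_image, Set.mem_iUnion]
    exact ⟨(g, A), ⟨(g.natDegree, l), mem_antidiagonal.2 (by exact_mod_cast hB),
      ⟨hg, rfl⟩, hW hg.ne_zero hBW, hA, hl⟩, rfl⟩

variable [Finite F]

theorem finite_tuplesBelow (W : Submodule F[X] (ι → F[X])) (n : ℕ) : (tuplesBelow W n).Finite := by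
  have : Finite (degreeLT F n) := Module.finite_of_finite F
  rw [tuplesBelow_eq_image]
  exact (Set.toFinite _).image _

theorem finite_tuplesOfDegree (W : Submodule F[X] (ι → F[X])) (n : ℕ) :
    (tuplesOfDegree W n).Finite :=
  (finite_tuplesBelow W (n + 1)).subset (tuplesBelow_succ W n ▸ Set.subset_union_right)

theorem finite_coprimeTuples (W : Submodule F[X] (ι → F[X])) (n : ℕ) :
    (coprimeTuples W n).Finite :=
  (finite_tuplesOfDegree W n).subset fun _ hB => ⟨hB.1, hB.2.2⟩

theorem finite_monic_degree_eq (n : ℕ) : {g : F[X] | g.Monic ∧ g.natDegree = n}.Finite :=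
  Set.finite_of_ncard_pos (by rw [ncard_monic_degree_eq]; exact pow_pos Nat.card_pos n)

theorem ncard_tuplesBelow_succ (W : Submodule F[X] (ι → F[X])) (n : ℕ) :
    (tuplesBelow W (n + 1)).ncard = (tuplesBelow W n).ncard + (tuplesOfDegree W n).ncard := by
  rw [tuplesBelow_succ, Set.ncard_union_eq _ (finite_tuplesBelow W n) (finite_tuplesOfDegree W n)]
  exact Set.disjoint_left.2 fun B h h' => h.2.ne h'.2

theorem ncard_tuplesOfDegree {W : Submodule F[X] (ι → F[X])}
    (hW : ∀ {g : F[X]} {B : ι → F[X]}, g ≠ 0 → g • B ∈ W → B ∈ W) (n : ℕ) :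
    (tuplesOfDegree W n).ncard =
      ∑ p ∈ antidiagonal n, Nat.card F ^ p.1 * (coprimeTuples W p.2).ncard := by
  have h_bij := bijOn_smul_factoredTuples hW n
  rw [← h_bij.image_eq, h_bij.injOn.ncard_image, ncard_biUnion_finset]
  · simp only [factoredTuples, Set.ncard_prod, ncard_monic_degree_eq]
  · exact fun p _ => (finite_monic_degree_eq p.1).prod (finite_coprimeTuples W p.2)
  · rintro p - p' - h_ne
    refine Set.disjoint_left.2 fun x hx hx' => h_ne (Prod.ext (hx.1.2.symm.trans hx'.1.2) ?_)
    exact_mod_cast hx.2.2.2.symm.trans hx'.2.2.2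

theorem ncard_tuplesOfDegree_succ {W : Submodule F[X] (ι → F[X])}
    (hW : ∀ {g : F[X]} {B : ι → F[X]}, g ≠ 0 → g • B ∈ W → B ∈ W) (n : ℕ) :
    (tuplesOfDegree W (n + 1)).ncard =
      (coprimeTuples W (n + 1)).ncard + Nat.card F * (tuplesOfDegree W n).ncard := by
  simp only [ncard_tuplesOfDegree hW, Finset.Nat.sum_antidiagonal_succ, Finset.mul_sum, pow_zero,
    one_mul, pow_succ', mul_assoc]

theorem ncard_coprimeTuples_succ_mul {W : Submodule F[X] (ι → F[X])}
    (hW : ∀ {g : F[X]} {B : ι → F[X]}, g ≠ 0 → g • B ∈ W → B ∈ W) {l r n : ℕ}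
    (h : ∀ k ≥ n, (tuplesBelow W k).ncard * Nat.card F ^ l = Nat.card F ^ (r * k)) :
    ((coprimeTuples W (n + 1)).ncard : ℚ) * (Nat.card F : ℚ) ^ l =
      (Nat.card F : ℚ) ^ (r * n) * ((Nat.card F : ℚ) ^ r - 1) *
        ((Nat.card F : ℚ) ^ r - Nat.card F) := by
  have h_below (k : ℕ) (hk : n ≤ k) := congrArg (Nat.cast (R := ℚ)) (h k hk)
  have h_succ (k : ℕ) := congrArg (Nat.cast (R := ℚ)) (ncard_tuplesBelow_succ W k)
  have h_rec := congrArg (Nat.cast (R := ℚ)) (ncard_tuplesOfDegree_succ hW n)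
  push_cast at h_below h_succ h_rec
  linear_combination (h_below (n + 2) (by omega) - (1 + (Nat.card F : ℚ)) *
    h_below (n + 1) (by omega) + (Nat.card F : ℚ) * h_below n le_rfl) -
    (Nat.card F : ℚ) ^ l * (h_succ (n + 1) - (Nat.card F : ℚ) * h_succ n + h_rec)

end LatticeCounting

section Planes

variable {F : Type*} [Field F]

/-- The plane in `F(X)³` orthogonal to a polynomial triple. -/
noncomputable def orthogonalPlane (B : Fin 3 → F[X]) :
    Submodule (RatFunc F) (Fin 3 → RatFunc F) :=
  dotOrthogonal (algebraMap F[X] (RatFunc F) ∘ B)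

theorem algebraMap_comp_ne_zero {A : Fin 3 → F[X]} (hA : A ≠ 0) :
    algebraMap F[X] (RatFunc F) ∘ A ≠ 0 := fun h =>
  hA (funext fun i => (map_eq_zero_iff _ (RatFunc.algebraMap_injective F)).1 (congrFun h i))

theorem algebraMap_comp_mem_orthogonalPlane {A B : Fin 3 → F[X]} :
    algebraMap F[X] (RatFunc F) ∘ A ∈ orthogonalPlane B ↔ A ∈ dotOrthogonal B := by
  rw [orthogonalPlane, mem_dotOrthogonal, ← RingHom.map_dotProduct,
    map_eq_zero_iff _ (RatFunc.algebraMap_injective F), mem_dotOrthogonal]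

theorem orthogonalPlane_units_smul (u : F[X]ˣ) (B : Fin 3 → F[X]) :
    orthogonalPlane (u • B) = orthogonalPlane B := by
  have h_smul : algebraMap F[X] (RatFunc F) ∘ (u • B) =
      algebraMap F[X] (RatFunc F) u • (algebraMap F[X] (RatFunc F) ∘ B) :=
    funext fun i => map_mul _ _ _
  rw [orthogonalPlane, h_smul, dotOrthogonal_smul (RatFunc.algebraMap_ne_zero u.ne_zero),
    orthogonalPlane]

theorem twoDimOfHeight_iff {V : Submodule (RatFunc F) (Fin 3 → RatFunc F)} {m : ℕ} :
    TwoDimOfHeight V m ↔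
      ∃ B : Fin 3 → F[X], IsCoprimeTuple B ∧ tupleDegree B = m ∧ orthogonalPlane B = V := by
  have h_finrank {B : Fin 3 → F[X]} (hB : IsCoprimeTuple B) :
      finrank (RatFunc F) (orthogonalPlane B) = 2 :=
    Nat.succ_injective (finrank_dotOrthogonal (algebraMap_comp_ne_zero hB.ne_zero))
  constructor
  · rintro ⟨h_two, B, hB, hm, h_le⟩
    refine ⟨B, hB, hm, .symm ?_⟩
    exact Submodule.eq_of_le_of_finrank_eq h_le (h_two.trans (h_finrank hB).symm)
  · rintro ⟨B, hB, hm, rfl⟩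
    exact ⟨h_finrank hB, B, hB, hm, fun v hv => hv⟩

namespace IsCoprimeTuple

theorem orthogonalPlane_eq_iff {A B : Fin 3 → F[X]} (hA : IsCoprimeTuple A)
    (hB : IsCoprimeTuple B) :
    orthogonalPlane A = orthogonalPlane B ↔ B ∈ MulAction.orbit F[X]ˣ A := by
  constructor
  · refine fun h => hA.mem_orbit_of_crossProduct_eq_zero hB (dotProduct_eq_zero _ fun w => ?_)
    have h_mem : A ⨯₃ w ∈ dotOrthogonal B := by
      rw [← algebraMap_comp_mem_orthogonalPlane, ← h, algebraMap_comp_mem_orthogonalPlane]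
      exact dot_self_cross A w
    rw [dotProduct_comm, triple_product_permutation, triple_product_permutation, ← cross_anticomm,
      dotProduct_neg, mem_dotOrthogonal.1 h_mem, neg_zero]
  · rintro ⟨u, rfl⟩
    exact (orthogonalPlane_units_smul u A).symm

theorem twoDimOfHeight_orthogonalPlane_iff {B : Fin 3 → F[X]} (hB : IsCoprimeTuple B) {m : ℕ} :
    TwoDimOfHeight (orthogonalPlane B) m ↔ tupleDegree B = m := by
  rw [twoDimOfHeight_iff]
  constructor
  · rintro ⟨B', hB', hm, h⟩
    obtain ⟨u, rfl⟩ := (hB'.orthogonalPlane_eq_iff hB).1 h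
    rw [tupleDegree_units_smul, hm]
  · exact fun hm => ⟨B, hB, hm, rfl⟩

end IsCoprimeTuple

theorem exists_mem_orthogonalPlane_vecHeight_iff {B : Fin 3 → F[X]} {l : ℕ} :
    (∃ v ∈ orthogonalPlane B, v ≠ 0 ∧ VecHeight v l) ↔
      (coprimeTuples (dotOrthogonal B) l).Nonempty := by
  constructor
  · rintro ⟨v, hv, -, c, A, hc, hA, hvA, hl⟩
    obtain rfl : v = c • (algebraMap F[X] (RatFunc F) ∘ A) := funext hvA
    exact ⟨A, algebraMap_comp_mem_orthogonalPlane.1 ((Submodule.smul_mem_iff _ hc).1 hv), hA, hl⟩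
  · rintro ⟨A, hAB, hA, hl⟩
    exact ⟨_, algebraMap_comp_mem_orthogonalPlane.2 hAB, algebraMap_comp_ne_zero hA.ne_zero,
      1, A, one_ne_zero, hA, fun i => (one_mul _).symm, hl⟩

theorem firstMinimum_orthogonalPlane {B : Fin 3 → F[X]} {l : ℕ} :
    FirstMinimum (orthogonalPlane B) l ↔
      IsLeast {l | (coprimeTuples (dotOrthogonal B) l).Nonempty} l := by
  simp only [FirstMinimum, exists_mem_orthogonalPlane_vecHeight_iff]

theorem IsCoprimeTuple.mem_orbit_of_mem_dotOrthogonal {A A' B : Fin 3 → F[X]} {l m : ℕ}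
    (hB : IsCoprimeTuple B) (hm : tupleDegree B = m) (hlm : 2 * l < m)
    (hA : A ∈ coprimeTuples (dotOrthogonal B) l) (hA'B : A' ∈ dotOrthogonal B)
    (hA' : IsCoprimeTuple A') (hl : tupleDegree A' ≤ l) : A' ∈ MulAction.orbit F[X]ˣ A := by
  refine hA.2.1.mem_orbit_of_crossProduct_eq_zero hA'
    (crossProduct_eq_zero_of_tupleDegree_add_lt hB hA.1 hA'B ?_)
  calc tupleDegree A + tupleDegree A' ≤ l + l := add_le_add hA.2.2.le hl
    _ = ((2 * l : ℕ) : WithBot ℕ) := by rw [two_mul, Nat.cast_add]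
    _ < tupleDegree B := by rw [hm]; exact_mod_cast hlm

theorem IsCoprimeTuple.firstMinimum_orthogonalPlane_iff {B : Fin 3 → F[X]} {l m : ℕ}
    (hB : IsCoprimeTuple B) (hm : tupleDegree B = m) (hlm : 2 * l < m) :
    FirstMinimum (orthogonalPlane B) l ↔ (coprimeTuples (dotOrthogonal B) l).Nonempty := by
  rw [firstMinimum_orthogonalPlane]
  refine ⟨fun h => h.1, fun ⟨A, hA⟩ => ⟨⟨A, hA⟩, ?_⟩⟩
  rintro l' ⟨A', hA'B, hA', hl'⟩
  by_contra! h_lt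
  obtain ⟨u, rfl⟩ := hB.mem_orbit_of_mem_dotOrthogonal hm hlm hA hA'B hA'
    (hl'.trans_le (by exact_mod_cast h_lt.le))
  rw [tupleDegree_units_smul, hA.2.2] at hl'
  exact h_lt.ne' (by exact_mod_cast hl')

theorem exists_firstMinimum_orthogonalPlane {B : Fin 3 → F[X]} {m : ℕ} (hm : tupleDegree B = m) :
    ∃ l, 2 * l ≤ m ∧ FirstMinimum (orthogonalPlane B) l := by
  obtain ⟨A, hA0, hA, hBA⟩ := exists_dotProduct_eq_zero_of_lt hm.le
    (n := m / 2 + 1) (by rw [Fintype.card_fin]; omega)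
  obtain ⟨g, A', hg, hA', rfl⟩ := exists_monic_smul_isCoprimeTuple hA0
  obtain ⟨k, hk⟩ := exists_tupleDegree_eq_natCast hA'.ne_zero
  have h_mem : (coprimeTuples (dotOrthogonal B) k).Nonempty :=
    ⟨A', mem_dotOrthogonal_of_smul_mem hg.ne_zero hBA, hA', hk⟩
  have hk_le : k ≤ m / 2 := by
    rw [tupleDegree_smul, hk, degree_eq_natDegree hg.ne_zero] at hA
    norm_cast at hA
    omega
  set s := {l | (coprimeTuples (dotOrthogonal B) l).Nonempty}
  have h_least : IsLeast s (sInf s) := ⟨Nat.sInf_mem ⟨k, h_mem⟩, fun _ => Nat.sInf_le⟩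
  have h_le : sInf s ≤ k := Nat.sInf_le h_mem
  exact ⟨sInf s, by omega, firstMinimum_orthogonalPlane.2 h_least⟩

end Planes

section Counting

variable {F : Type*} [Field F]

/-- The two-dimensional subspaces of height `m`. -/
def planesOfHeight (F : Type*) [Field F] (m : ℕ) :
    Set (Submodule (RatFunc F) (Fin 3 → RatFunc F)) :=
  {V | TwoDimOfHeight V m}

/-- The two-dimensional subspaces of height `m` whose first minimum is `l`. -/
def planesOfMinimum (F : Type*) [Field F] (m l : ℕ) :
    Set (Submodule (RatFunc F) (Fin 3 → RatFunc F)) :=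
  {V | TwoDimOfHeight V m ∧ FirstMinimum V l}

/-- The coprime triples of height `m` whose orthogonal plane has first minimum `l`. -/
def normalsOfMinimum (F : Type*) [Field F] (m l : ℕ) : Set (Fin 3 → F[X]) :=
  {B ∈ coprimeTuples ⊤ m | FirstMinimum (orthogonalPlane B) l}

theorem planesOfHeight_eq_image (m : ℕ) :
    planesOfHeight F m = orthogonalPlane '' coprimeTuples ⊤ m := by
  ext V
  simp only [planesOfHeight, coprimeTuples, Set.mem_ofPred_eq, Set.mem_image,
    twoDimOfHeight_iff, Submodule.mem_top, true_and, and_assoc]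

theorem planesOfHeight_eq_biUnion (m : ℕ) :
    planesOfHeight F m = ⋃ l ∈ Finset.range (m / 2 + 1), planesOfMinimum F m l := by
  ext V
  simp only [Set.mem_iUnion, Finset.mem_range]
  constructor
  · intro hV
    obtain ⟨B, -, hm, rfl⟩ := twoDimOfHeight_iff.1 hV
    obtain ⟨l, hl, h_min⟩ := exists_firstMinimum_orthogonalPlane hm
    exact ⟨l, by omega, hV, h_min⟩
  · rintro ⟨l, -, hV, -⟩
    exact hV

theorem natCard_units_polynomial : Nat.card F[X]ˣ = Nat.card F - 1 := by
  rw [← Nat.card_units]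
  refine (Nat.card_congr (Equiv.ofBijective (Units.map C.toMonoidHom) ⟨?_, fun u => ?_⟩)).symm
  · exact Units.map_injective C_injective
  · obtain ⟨r, hr, h⟩ := Polynomial.isUnit_iff.1 u.isUnit
    exact ⟨hr.unit, Units.ext h⟩

variable [Finite F]

theorem ncard_orbit_units {ι : Type*} {A : ι → F[X]} (hA : A ≠ 0) :
    ((MulAction.orbit F[X]ˣ A).ncard : ℚ) = Nat.card F - 1 := by
  have h_inj : Function.Injective fun u : F[X]ˣ => u • A := fun u v h =>
    Units.ext (smul_left_injective _ hA h)
  rw [MulAction.orbit, Set.ncard_range_of_injective h_inj, natCard_units_polynomial,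
    Nat.cast_sub Nat.card_pos, Nat.cast_one]

theorem finite_planesOfHeight (m : ℕ) : (planesOfHeight F m).Finite :=
  planesOfHeight_eq_image (F := F) m ▸ (finite_coprimeTuples ⊤ m).image _

theorem finite_planesOfMinimum (m l : ℕ) : (planesOfMinimum F m l).Finite :=
  (finite_planesOfHeight m).subset fun _ hV => hV.1

theorem ncard_coprimeTuples_orthogonalPlane_mem {m : ℕ}
    {S : Set (Submodule (RatFunc F) (Fin 3 → RatFunc F))} (hS : S ⊆ planesOfHeight F m) :
    ({B ∈ coprimeTuples ⊤ m | orthogonalPlane B ∈ S}.ncard : ℚ) = S.ncard * (Nat.card F - 1) := by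
  rw [← mul_one (Set.ncard _ : ℚ)]
  refine ncard_mul_eq_ncard_mul ((finite_coprimeTuples ⊤ m).subset (Set.sep_subset _ _))
    ((finite_planesOfHeight m).subset hS) (fun B V => orthogonalPlane B = V) ?_ ?_
  · rintro B ⟨-, hBS⟩
    have h_fiber : {V ∈ S | orthogonalPlane B = V} = {orthogonalPlane B} :=
      Set.ext fun V => ⟨fun h => h.2.symm, by rintro rfl; exact ⟨hBS, rfl⟩⟩
    rw [h_fiber, Set.ncard_singleton, Nat.cast_one]
  · intro V hV
    obtain ⟨B, ⟨-, hB, hm⟩, rfl⟩ := planesOfHeight_eq_image (F := F) m ▸ hS hV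
    rw [← ncard_orbit_units hB.ne_zero]
    congr 2
    ext B'
    constructor
    · rintro ⟨⟨⟨-, hB', -⟩, -⟩, h⟩
      exact (hB.orthogonalPlane_eq_iff hB').1 h.symm
    · rintro ⟨u, rfl⟩
      have h_plane := orthogonalPlane_units_smul u B
      exact ⟨⟨⟨Submodule.mem_top, hB.units_smul u, (tupleDegree_units_smul u B).trans hm⟩,
        by rwa [h_plane]⟩, h_plane⟩

theorem ncard_coprimeTuples_top (m : ℕ) :
    ((coprimeTuples (⊤ : Submodule F[X] (Fin 3 → F[X])) m).ncard : ℚ) =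
      (planesOfHeight F m).ncard * (Nat.card F - 1) := by
  rw [← ncard_coprimeTuples_orthogonalPlane_mem subset_rfl]
  congr 2
  exact (Set.sep_eq_self_iff_mem_true.2 fun B hB =>
    (hB.2.1.twoDimOfHeight_orthogonalPlane_iff).2 hB.2.2).symm

theorem ncard_normalsOfMinimum (m l : ℕ) :
    ((normalsOfMinimum F m l).ncard : ℚ) = (planesOfMinimum F m l).ncard * (Nat.card F - 1) := by
  rw [← ncard_coprimeTuples_orthogonalPlane_mem fun _ hV => hV.1]
  congr 2
  ext B
  refine and_congr_right fun hB => ⟨fun h => ⟨?_, h⟩, fun h => h.2⟩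
  exact (hB.2.1.twoDimOfHeight_orthogonalPlane_iff).2 hB.2.2

/-- Double counting of the pairs of a normal `B` and a shortest vector `A` of its plane. -/
theorem ncard_normalsOfMinimum_mul {m l : ℕ} (hlm : 2 * l < m) {c : ℚ}
    (hc : ∀ A ∈ coprimeTuples (⊤ : Submodule F[X] (Fin 3 → F[X])) l,
      ((coprimeTuples (dotOrthogonal A) m).ncard : ℚ) = c) :
    ((normalsOfMinimum F m l).ncard : ℚ) * (Nat.card F - 1) =
      (coprimeTuples (⊤ : Submodule F[X] (Fin 3 → F[X])) l).ncard * c := by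
  refine ncard_mul_eq_ncard_mul ((finite_coprimeTuples ⊤ m).subset (Set.sep_subset _ _))
    (finite_coprimeTuples ⊤ l) (fun B A => A ∈ dotOrthogonal B) ?_ ?_
  · rintro B ⟨⟨-, hB, hm⟩, h_min⟩
    obtain ⟨A, hA⟩ := (hB.firstMinimum_orthogonalPlane_iff hm hlm).1 h_min
    rw [← ncard_orbit_units hA.2.1.ne_zero]
    congr 2
    ext A'
    constructor
    · rintro ⟨⟨-, hA', hl⟩, hA'B⟩
      exact hB.mem_orbit_of_mem_dotOrthogonal hm hlm hA hA'B hA' hl.le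
    · rintro ⟨u, rfl⟩
      exact ⟨⟨Submodule.mem_top, hA.2.1.units_smul u,
        (tupleDegree_units_smul u A).trans hA.2.2⟩, Submodule.smul_mem _ (u : F[X]) hA.1⟩
  · intro A hA
    rw [← hc A hA]
    congr 2
    ext B
    constructor
    · rintro ⟨⟨⟨-, hB⟩, -⟩, hAB⟩
      exact ⟨mem_dotOrthogonal_comm.1 hAB, hB⟩
    · rintro ⟨hBA, hB, hm⟩
      have hAB := mem_dotOrthogonal_comm.1 hBA
      exact ⟨⟨⟨Submodule.mem_top, hB, hm⟩,
        (hB.firstMinimum_orthogonalPlane_iff hm hlm).2 ⟨A, hAB, hA.2⟩⟩, hAB⟩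

theorem ncard_coprimeTuples_top_zero :
    ((coprimeTuples (⊤ : Submodule F[X] (Fin 3 → F[X])) 0).ncard : ℚ) =
      (Nat.card F : ℚ) ^ 3 - 1 := by
  have h_degree := ncard_tuplesOfDegree (W := (⊤ : Submodule F[X] (Fin 3 → F[X])))
    (fun _ _ => Submodule.mem_top) 0
  have h_below := ncard_tuplesBelow_succ (⊤ : Submodule F[X] (Fin 3 → F[X])) 0
  simp only [Finset.HasAntidiagonal.antidiagonal_zero, Finset.sum_singleton, pow_zero, one_mul]
    at h_degree
  rw [ncard_tuplesBelow_top, ncard_tuplesBelow_top, h_degree, Fintype.card_fin] at h_below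
  have h_cast := congrArg (Nat.cast (R := ℚ)) h_below
  push_cast at h_cast
  linear_combination -h_cast

theorem ncard_coprimeTuples_top_succ (n : ℕ) :
    ((coprimeTuples (⊤ : Submodule F[X] (Fin 3 → F[X])) (n + 1)).ncard : ℚ) =
      (Nat.card F : ℚ) ^ (3 * n) * ((Nat.card F : ℚ) ^ 3 - 1) *
        ((Nat.card F : ℚ) ^ 3 - Nat.card F) := by
  simpa using ncard_coprimeTuples_succ_mul (W := (⊤ : Submodule F[X] (Fin 3 → F[X])))
    (fun _ _ => Submodule.mem_top) (l := 0) (r := 3) (n := n)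
    (fun k _ => by rw [ncard_tuplesBelow_top, Fintype.card_fin, pow_zero, mul_one])

theorem IsCoprimeTuple.ncard_coprimeTuples_dotOrthogonal_mul {A : Fin 3 → F[X]} {l n : ℕ}
    (hA : IsCoprimeTuple A) (hl : tupleDegree A = l) (hn : l ≤ n) :
    ((coprimeTuples (dotOrthogonal A) (n + 1)).ncard : ℚ) * (Nat.card F : ℚ) ^ l =
      (Nat.card F : ℚ) ^ (2 * n) * ((Nat.card F : ℚ) ^ 2 - 1) *
        ((Nat.card F : ℚ) ^ 2 - Nat.card F) :=
  ncard_coprimeTuples_succ_mul mem_dotOrthogonal_of_smul_mem fun _ hk =>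
    hA.ncard_tuplesBelow_dotOrthogonal_mul hl (Fintype.card_fin 3) (hn.trans hk)

theorem one_lt_natCard_cast (F : Type*) [Field F] [Finite F] : (1 : ℚ) < Nat.card F := by
  exact_mod_cast Finite.one_lt_card

theorem ncard_planesOfMinimum_mul {l n : ℕ} (hl : 2 * l < n + 1) :
    ((planesOfMinimum F (n + 1) l).ncard : ℚ) *
        ((Nat.card F : ℚ) ^ (l + n) * ((Nat.card F : ℚ) ^ 3 - 1)) =
      (coprimeTuples (⊤ : Submodule F[X] (Fin 3 → F[X])) l).ncard *
        (planesOfHeight F (n + 1)).ncard := by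
  have h_one := one_lt_natCard_cast F
  set q : ℚ := (Nat.card F : ℚ)
  have h_sub : (q - 1) ^ 2 ≠ 0 := pow_ne_zero 2 (sub_ne_zero.2 h_one.ne')
  have h_pow : q ^ l ≠ 0 := pow_ne_zero l (by positivity)
  have h_pairs := ncard_normalsOfMinimum_mul hl
    (c := q ^ (2 * n) * (q ^ 2 - 1) * (q ^ 2 - q) / q ^ l) fun A hA =>
      eq_div_of_mul_eq h_pow (hA.2.1.ncard_coprimeTuples_dotOrthogonal_mul hA.2.2 (by omega))
  rw [ncard_normalsOfMinimum, ← mul_div_assoc, eq_div_iff h_pow] at h_pairs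
  have h_total := ncard_coprimeTuples_top_succ (F := F) n
  rw [ncard_coprimeTuples_top] at h_total
  refine mul_right_cancel₀ h_sub ?_
  linear_combination q ^ n * (q ^ 3 - 1) * h_pairs -
    (coprimeTuples (⊤ : Submodule F[X] (Fin 3 → F[X])) l).ncard * (q - 1) * h_total

theorem ncard_planesOfMinimum_zero {m : ℕ} (hm : 0 < m) :
    ((planesOfMinimum F m 0).ncard : ℚ) =
      (Nat.card F : ℚ) ^ (1 - m : ℤ) * (planesOfHeight F m).ncard := by
  obtain ⟨n, rfl⟩ := Nat.exists_eq_add_one.2 hm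
  have h_one := one_lt_natCard_cast F
  have h_mul := ncard_planesOfMinimum_mul (F := F) (l := 0) (n := n) (by omega)
  rw [ncard_coprimeTuples_top_zero] at h_mul
  set q : ℚ := (Nat.card F : ℚ)
  have h_cube : q ^ 3 - 1 ≠ 0 := sub_ne_zero.2 (one_lt_pow₀ h_one three_ne_zero).ne'
  have h_exp : (1 - (n + 1 : ℕ) : ℤ) = -(n : ℤ) := by push_cast; ring
  rw [h_exp, zpow_neg, zpow_natCast, eq_inv_mul_iff_mul_eq₀ (by positivity)]
  refine mul_right_cancel₀ h_cube ?_
  linear_combination h_mul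

theorem ncard_planesOfMinimum {m l : ℕ} (hl : 0 < l) (hlm : 2 * l < m) :
    ((planesOfMinimum F m l).ncard : ℚ) = (Nat.card F : ℚ) ^ (2 * l - m : ℤ) *
      ((Nat.card F : ℚ) - (Nat.card F : ℚ)⁻¹) * (planesOfHeight F m).ncard := by
  obtain ⟨n, rfl⟩ := Nat.exists_eq_add_one.2 (by omega : 0 < m)
  obtain ⟨k, rfl⟩ := Nat.exists_eq_add_one.2 hl
  have h_one := one_lt_natCard_cast F
  have h_mul := ncard_planesOfMinimum_mul (F := F) hlm
  rw [ncard_coprimeTuples_top_succ] at h_mul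
  set q : ℚ := (Nat.card F : ℚ)
  have hq : q ≠ 0 := by positivity
  have h_cube : q ^ 3 - 1 ≠ 0 := sub_ne_zero.2 (one_lt_pow₀ h_one three_ne_zero).ne'
  have h_exp : (2 * (k + 1 : ℕ) - (n + 1 : ℕ) : ℤ) = (2 * k + 1 : ℕ) - (n : ℤ) := by
    push_cast; ring
  rw [h_exp, zpow_sub₀ hq, zpow_natCast, zpow_natCast]
  refine mul_right_cancel₀ (mul_ne_zero (pow_ne_zero (k + 1 + n) hq) h_cube) ?_
  rw [h_mul]
  field_simp
  ring

theorem sum_ncard_planesOfMinimum {m k : ℕ} (hk : 2 * k < m) :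
    ∑ l ∈ Finset.range (k + 1), ((planesOfMinimum F m l).ncard : ℚ) =
      (Nat.card F : ℚ) ^ (2 * k + 1 - m : ℤ) * (planesOfHeight F m).ncard := by
  induction k with
  | zero => simpa using ncard_planesOfMinimum_zero (F := F) hk
  | succ k ih =>
    have hq : (Nat.card F : ℚ) ≠ 0 := Nat.cast_ne_zero.2 Nat.card_pos.ne'
    have h_add : (2 * (k + 1 : ℕ) + 1 - m : ℤ) = (2 * (k + 1 : ℕ) - m) + 1 := by ring
    have h_sub : (2 * k + 1 - m : ℤ) = (2 * (k + 1 : ℕ) - m) - 1 := by push_cast; ring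
    rw [Finset.sum_range_succ, ih (by omega), ncard_planesOfMinimum k.succ_pos hk, h_add, h_sub,
      zpow_add_one₀ hq, zpow_sub_one₀ hq]
    ring

theorem ncard_planesOfHeight_eq_sum (m : ℕ) :
    (planesOfHeight F m).ncard =
      ∑ l ∈ Finset.range (m / 2 + 1), (planesOfMinimum F m l).ncard := by
  rw [planesOfHeight_eq_biUnion, ncard_biUnion_finset fun l _ => finite_planesOfMinimum m l]
  rintro l - l' - h_ne
  exact Set.disjoint_left.2 fun V h h' => h_ne (h.2.unique h'.2)

theorem ncard_planesOfMinimum_half {j : ℕ} (hj : 0 < j) :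
    ((planesOfMinimum F (2 * j) j).ncard : ℚ) =
      (1 - (Nat.card F : ℚ)⁻¹) * (planesOfHeight F (2 * j)).ncard := by
  obtain ⟨k, rfl⟩ := Nat.exists_eq_add_one.2 hj
  have h_total := congrArg (Nat.cast (R := ℚ)) (ncard_planesOfHeight_eq_sum (F := F) (2 * (k + 1)))
  have h_exp : (2 * k + 1 - (2 * (k + 1) : ℕ) : ℤ) = -1 := by push_cast; ring
  rw [Nat.mul_div_cancel_left _ two_pos, Nat.cast_sum, Finset.sum_range_succ,
    sum_ncard_planesOfMinimum (by omega), h_exp, zpow_neg_one] at h_total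
  linear_combination -h_total

end Counting

/-- Among two-dimensional subspaces `V ⊂ 𝔽_q(X)³` of height `2j`, the proportion with
`μ₁(V) = j - a` equals `0` if `a > j`, `q^{-2a+1}` if `a = j`, `q^{-2a}(q - q⁻¹)` if
`0 < a < j`, and `q^{-2a}(1 - q⁻¹)` if `a = 0`. -/
theorem proportion_first_minimum {F : Type*} [Field F] [Fintype F] (q j a : ℕ)
    (hq : Fintype.card F = q) (hj : 1 ≤ j) :
    (Nat.card {V : Submodule (RatFunc F) (Fin 3 → RatFunc F) //
        TwoDimOfHeight V (2 * j) ∧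
        ∃ μ : ℕ, FirstMinimum V μ ∧ (μ : ℤ) = (j : ℤ) - (a : ℤ)} : ℚ) =
      (if j < a then 0
       else if a = j then (q : ℚ) ^ (1 - 2 * (a : ℤ))
       else if 0 < a then (q : ℚ) ^ (-2 * (a : ℤ)) * ((q : ℚ) - (q : ℚ)⁻¹)
       else (q : ℚ) ^ (-2 * (a : ℤ)) * (1 - (q : ℚ)⁻¹)) *
      (Nat.card {V : Submodule (RatFunc F) (Fin 3 → RatFunc F) //
        TwoDimOfHeight V (2 * j)} : ℚ) := by
  obtain rfl : Nat.card F = q := Nat.card_eq_fintype_card.trans hq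
  change _ = _ * ((planesOfHeight F (2 * j)).ncard : ℚ)
  split_ifs with h_gt h_eq h_pos
  · have h_empty : IsEmpty {V : Submodule (RatFunc F) (Fin 3 → RatFunc F) //
        TwoDimOfHeight V (2 * j) ∧ ∃ μ : ℕ, FirstMinimum V μ ∧ (μ : ℤ) = (j : ℤ) - (a : ℤ)} :=
      ⟨by rintro ⟨-, -, μ, -, hμ⟩; omega⟩
    rw [Nat.card_of_isEmpty, Nat.cast_zero, zero_mul]
  all_goals
    obtain ⟨l, rfl⟩ := Nat.exists_eq_add_of_le' (not_lt.1 h_gt)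
    have h_minimum (μ : ℕ) : (μ : ℤ) = (l + a : ℕ) - (a : ℤ) ↔ μ = l := by omega
    simp only [h_minimum, exists_eq_right]
    change ((planesOfMinimum F (2 * (l + a)) l).ncard : ℚ) = _
  · obtain rfl : l = 0 := by omega
    simpa using ncard_planesOfMinimum_zero (F := F) (by omega : 0 < 2 * (0 + a))
  · rw [ncard_planesOfMinimum (by omega) (by omega)]
    congr 3
    push_cast
    ring
  · obtain rfl : a = 0 := by omega
    simpa using ncard_planesOfMinimum_half (F := F) hj
end

section
/- Let q be a power of 3, g ≥ 0, ε ∈ {1,2}, and suppose g ≡ 0 mod 3 with g ≥ 3 (cases ε = 1 and ε = 2), or g ≡ 2 mod 3 with ε = 2. Then the proportion μ_{ε,g}(a) of monic cubefree f ∈ F_q[X] of degree 2g+ε for which the associated a-number equals a is: 1 - q^{-1} if a = 0; q^{-2a+1}(1 - q^{-2}) if 0 < a < ⌊(g+1)/3⌋; q^{-2a+1} if a = ⌊(g+1)/3⌋; and 0 if a > ⌊(g+1)/3⌋. -/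
open Polynomial

/-!
By uniqueness of the decomposition `f = c₀ ^ 3 + c₁ ^ 3 X + c₂ ^ 3 X ^ 2`, a polynomial is cubefree
exactly when the vector `c = (c₀, c₁, c₂)` is unimodular, and its `a`-number is the dimension of the
space of syzygies of `c` of degree less than `M = ⌊(g + 1) / 3⌋`, while `c` has degree `2 * M`.

The cross product of two such syzygies is a multiple of `c` of degree less than `2 * M`, hence zero.
So if `a > 0`, the syzygies are the multiples of a single unimodular syzygy `Q`, of degree `M - a`
and unique up to scalars. Counting the pairs `(c, Q)` first by `Q` and then by `c` reduces the case
`a > 0` to counting unimodular vectors, either all of them or those orthogonal to a given `Q`; for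
this, all vectors are sorted by their content. The case `a = 0` follows because the proportions
sum to `1`.
-/

namespace ANumber

open scoped Matrix

section Counting

variable {α β : Type*} {s : Set α} {t : Set β}

theorem ncard_mul_eq_ncard_mul {R : Type*} [Semiring R] {m n : R} (hs : s.Finite)
    (ht : t.Finite) (r : α → β → Prop) (hm : ∀ a ∈ s, ({b ∈ t | r a b}.ncard : R) = m)
    (hn : ∀ b ∈ t, ({a ∈ s | r a b}.ncard : R) = n) : s.ncard * m = t.ncard * n := by
  classical
  lift s to Finset α using hs
  lift t to Finset β using ht
  simp only [Finset.mem_coe] at hm hn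
  have h := congrArg (Nat.cast (R := R))
    (Finset.sum_card_bipartiteAbove_eq_sum_card_bipartiteBelow (s := s) (t := t) r)
  push_cast [← Set.ncard_coe_finset, Finset.coe_bipartiteAbove, Finset.coe_bipartiteBelow] at h
  rw [Finset.sum_congr rfl hm, Finset.sum_congr rfl hn, Finset.sum_const, Finset.sum_const] at h
  simpa using h

theorem ncard_eq_ncard_mul_of_fiber {R : Type*} [Semiring R] {n : R} (hs : s.Finite)
    (ht : t.Finite) (f : α → β) (hf : ∀ a ∈ s, f a ∈ t)
    (hn : ∀ b ∈ t, ({a ∈ s | f a = b}.ncard : R) = n) : (s.ncard : R) = t.ncard * n := by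
  rw [← ncard_mul_eq_ncard_mul hs ht (fun a b => f a = b) (fun a ha => ?_) hn, mul_one]
  have : {b ∈ t | f a = b} = {f a} := by
    ext b
    exact ⟨fun h => h.2.symm, by rintro rfl; exact ⟨hf a ha, rfl⟩⟩
  rw [this, Set.ncard_singleton, Nat.cast_one]

theorem ncard_eq_sum_ncard_fiber (hs : s.Finite) (f : α → β) (t : Finset β)
    (hf : ∀ a ∈ s, f a ∈ t) : s.ncard = ∑ b ∈ t, {a ∈ s | f a = b}.ncard := by
  classical
  lift s to Finset α using hs
  simp only [Set.ncard_coe_finset, Finset.mem_coe] at *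
  rw [Finset.card_eq_sum_card_fiberwise hf]
  refine Finset.sum_congr rfl fun b _ => ?_
  rw [← Set.ncard_coe_finset, Finset.coe_filter]

theorem ncard_univ_pi {ι : Type*} [Fintype ι] {α : ι → Type*} (s : ∀ i, Set (α i)) :
    (Set.univ.pi s).ncard = ∏ i, (s i).ncard := by
  rw [Set.ncard, Set.encard_pi_eq_prod_encard, ENat.toNat_prod]
  rfl

end Counting

section Unimodular

variable {R ι : Type*} [CommRing R] [Fintype ι]

/-- A vector over a commutative ring is unimodular if its entries generate the unit ideal. -/
def IsUnimodular (c : ι → R) : Prop := ∃ u, u ⬝ᵥ c = 1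

theorem IsUnimodular.ne_zero [Nontrivial R] {c : ι → R} (hc : IsUnimodular c) : c ≠ 0 := by
  rintro rfl
  obtain ⟨u, hu⟩ := hc
  simp at hu

theorem IsUnimodular.smul {c : ι → R} (hc : IsUnimodular c) {a : R} (ha : IsUnit a) :
    IsUnimodular (a • c) := by
  obtain ⟨u, hu⟩ := hc
  obtain ⟨b, hb⟩ := ha.exists_left_inv
  exact ⟨b • u, by rw [smul_dotProduct, dotProduct_smul, hu, smul_smul, hb, one_smul]⟩

theorem IsUnimodular.dvd_of_forall_dvd_mul {c : ι → R} (hc : IsUnimodular c) {d a : R}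
    (hd : ∀ i, d ∣ a * c i) : d ∣ a := by
  obtain ⟨u, hu⟩ := hc
  have : a = ∑ i, u i * (a * c i) := by
    simp only [mul_left_comm, ← Finset.mul_sum]
    rw [← dotProduct, hu, mul_one]
  rw [this]
  exact Finset.dvd_sum fun i _ => (hd i).mul_left _

theorem exists_eq_smul_isUnimodular [IsDomain R] [IsPrincipalIdealRing R] {c : ι → R}
    (hc : c ≠ 0) : ∃ (d : R) (c' : ι → R), IsUnimodular c' ∧ c = d • c' := by
  obtain ⟨d, hd⟩ := (IsPrincipalIdealRing.principal (Ideal.span (Set.range c))).principal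
  rw [← Ideal.span] at hd
  have hdvd : ∀ i, d ∣ c i := fun i => by
    rw [← Ideal.mem_span_singleton, ← hd]
    exact Ideal.subset_span ⟨i, rfl⟩
  choose c' hc' using hdvd
  obtain rfl : c = d • c' := funext hc'
  have hd0 : d ≠ 0 := left_ne_zero_of_smul hc
  obtain ⟨u, hu⟩ :=
    Ideal.mem_span_range_iff_exists_fun.1 (hd ▸ Ideal.mem_span_singleton_self d)
  refine ⟨d, c', ⟨u, mul_left_cancel₀ hd0 ?_⟩, rfl⟩
  rw [mul_one, ← smul_eq_mul, ← dotProduct_smul]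
  exact hu

theorem isUnimodular_iff_forall_dvd_isUnit [IsDomain R] [IsPrincipalIdealRing R]
    {c : ι → R} : IsUnimodular c ↔ ∀ d, (∀ i, d ∣ c i) → IsUnit d := by
  refine ⟨fun hc d hd => isUnit_of_dvd_one (hc.dvd_of_forall_dvd_mul (by simpa using hd)),
    fun h => ?_⟩
  have hc : c ≠ 0 := by
    rintro rfl
    exact not_isUnit_zero (h 0 fun _ => dvd_rfl)
  obtain ⟨d, c', hc', rfl⟩ := exists_eq_smul_isUnimodular hc
  exact hc'.smul (h d fun i => dvd_mul_right d (c' i))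

theorem IsUnimodular.exists_eq_smul_of_cross_eq_zero {c r : Fin 3 → R} (hc : IsUnimodular c)
    (h : c ⨯₃ r = 0) : ∃ a : R, r = a • c := by
  obtain ⟨u, hu⟩ := hc
  have := cross_cross_eq_smul_sub_smul' u c r
  rw [h, map_zero, dotProduct_comm c u, hu, one_smul] at this
  exact ⟨u ⬝ᵥ r, (sub_eq_zero.1 this.symm).symm⟩

end Unimodular

section LeadingTerm

variable {ι R : Type*}

/-- `v X ^ D` is the degree-`D` term of a vector `c` of polynomials of degree at most `D`; the
vector `v` may vanish, and `c` has exact degree `D` when it does not. -/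
def HasLeadingTerm [Semiring R] (D : ℕ) (v : ι → R) (c : ι → R[X]) : Prop :=
  ∀ i, (c i).natDegree ≤ D ∧ (c i).coeff D = v i

/-- The vectors of polynomials of degree less than `n`. -/
noncomputable def vecLT (ι R : Type*) [Semiring R] (n : ℕ) : Submodule R (ι → R[X]) :=
  Submodule.pi Set.univ fun _ => degreeLT R n

section Semiring

variable [Semiring R] {D e n : ℕ} {v w : ι → R} {c Q : ι → R[X]}

theorem mem_vecLT_iff : c ∈ vecLT ι R n ↔ ∀ i, (c i).degree < n := by
  simp [vecLT, mem_degreeLT]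

theorem HasLeadingTerm.eq_coeff (hc : HasLeadingTerm D v c) : v = fun i => (c i).coeff D :=
  funext fun i => (hc i).2.symm

theorem HasLeadingTerm.exists_degree_eq (hc : HasLeadingTerm D v c) (hv : v ≠ 0) :
    ∃ i, (c i).degree = D := by
  obtain ⟨i, hi⟩ := Function.ne_iff.1 hv
  exact ⟨i, degree_eq_of_le_of_coeff_ne_zero (natDegree_le_iff_degree_le.1 (hc i).1)
    ((hc i).2 ▸ hi)⟩

theorem HasLeadingTerm.ne_zero (hc : HasLeadingTerm D v c) (hv : v ≠ 0) : c ≠ 0 := by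
  rintro rfl
  obtain ⟨i, hi⟩ := hc.exists_degree_eq hv
  simp at hi

theorem HasLeadingTerm.mem_vecLT (hc : HasLeadingTerm D v c) (hn : D < n) : c ∈ vecLT ι R n :=
  mem_vecLT_iff.2 fun i => (natDegree_le_iff_degree_le.1 (hc i).1).trans_lt (by exact_mod_cast hn)

theorem HasLeadingTerm.lt_of_mem_vecLT (hc : HasLeadingTerm D v c) (hv : v ≠ 0)
    (h : c ∈ vecLT ι R n) : D < n := by
  obtain ⟨i, hi⟩ := hc.exists_degree_eq hv
  exact_mod_cast hi ▸ mem_vecLT_iff.1 h i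

theorem hasLeadingTerm_monomial (D : ℕ) (v : ι → R) :
    HasLeadingTerm D v fun i => monomial D (v i) :=
  fun i => ⟨natDegree_monomial_le _, coeff_monomial_same D (v i)⟩

theorem exists_hasLeadingTerm [Finite ι] (hc : c ≠ 0) :
    ∃ D v, v ≠ 0 ∧ HasLeadingTerm D v c := by
  obtain ⟨j, hj⟩ := Function.ne_iff.1 hc
  have : Nonempty ι := ⟨j⟩
  obtain ⟨i, hi⟩ := Finite.exists_max fun i => (c i).degree
  have hci : c i ≠ 0 := fun h0 => hj (degree_eq_bot.1 (by simpa [h0] using hi j))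
  refine ⟨(c i).natDegree, fun k => (c k).coeff (c i).natDegree,
    Function.ne_iff.2 ⟨i, leadingCoeff_ne_zero.2 hci⟩,
    fun k => ⟨natDegree_le_natDegree (hi k), rfl⟩⟩

theorem HasLeadingTerm.natDegree_dotProduct_le [Fintype ι] (hQ : HasLeadingTerm e w Q)
    (hc : HasLeadingTerm D v c) : (Q ⬝ᵥ c).natDegree ≤ e + D :=
  natDegree_sum_le_of_forall_le _ _ fun i _ => natDegree_mul_le_of_le (hQ i).1 (hc i).1

theorem HasLeadingTerm.coeff_dotProduct [Fintype ι] (hQ : HasLeadingTerm e w Q)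
    (hc : HasLeadingTerm D v c) : (Q ⬝ᵥ c).coeff (e + D) = w ⬝ᵥ v := by
  simp only [dotProduct, finsetSum_coeff]
  exact Finset.sum_congr rfl fun i _ => by
    rw [coeff_mul_add_eq_of_natDegree_le (hQ i).1 (hc i).1, (hQ i).2, (hc i).2]

theorem HasLeadingTerm.degree_dotProduct_lt [Fintype ι] (hQ : HasLeadingTerm e w Q)
    (hc : HasLeadingTerm D v c) (h : w ⬝ᵥ v = 0) : (Q ⬝ᵥ c).degree < (e + D : ℕ) := by
  refine (natDegree_le_iff_degree_le.1 (hQ.natDegree_dotProduct_le hc)).lt_of_ne fun hdeg => ?_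
  exact coeff_ne_zero_of_eq_degree hdeg (by rw [hQ.coeff_dotProduct hc, h])

theorem HasLeadingTerm.add (hc : HasLeadingTerm D v c) (hQ : HasLeadingTerm D w Q) :
    HasLeadingTerm D (v + w) (c + Q) := fun i =>
  ⟨natDegree_add_le_of_degree_le (hc i).1 (hQ i).1, by
    rw [Pi.add_apply, coeff_add, (hc i).2, (hQ i).2, Pi.add_apply]⟩

theorem hasLeadingTerm_zero_iff_mem_vecLT : HasLeadingTerm D 0 c ↔ c ∈ vecLT ι R D := by
  rw [mem_vecLT_iff]
  refine forall_congr' fun i => ⟨fun h => ?_, fun h => ?_⟩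
  · refine (natDegree_le_iff_degree_le.1 h.1).lt_of_ne fun hdeg => ?_
    exact coeff_ne_zero_of_eq_degree hdeg h.2
  · exact ⟨natDegree_le_iff_degree_le.2 h.le, coeff_eq_zero_of_degree_lt h⟩

theorem HasLeadingTerm.smul_iff {h : R[X]} (hh : h.Monic) :
    HasLeadingTerm (h.natDegree + D) v (h • c) ↔ HasLeadingTerm D v c := by
  refine forall_congr' fun i => ?_
  rw [Pi.smul_apply, smul_eq_mul]
  have hdeg : (h * c i).natDegree ≤ h.natDegree + D ↔ (c i).natDegree ≤ D := by
    obtain h0 | h0 := eq_or_ne (c i) 0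
    · simp [h0]
    · rw [hh.natDegree_mul' h0, Nat.add_le_add_iff_left]
  rw [hdeg]
  refine and_congr_right fun hci => ?_
  rw [coeff_mul_add_eq_of_natDegree_le le_rfl hci, hh.coeff_natDegree, one_mul]

end Semiring

theorem HasLeadingTerm.hasLeadingTerm_iff_sub_mem [Ring R] {D : ℕ} {v : ι → R} {c d : ι → R[X]}
    (hc : HasLeadingTerm D v c) : HasLeadingTerm D v d ↔ d - c ∈ vecLT ι R D := by
  rw [← hasLeadingTerm_zero_iff_mem_vecLT]
  constructor
  · intro hd i
    exact ⟨(natDegree_sub_le_of_le (hd i).1 (hc i).1).trans_eq (max_self D),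
      by simp [(hc i).2, (hd i).2]⟩
  · intro h
    simpa using h.add hc

theorem HasLeadingTerm.smul_mem_vecLT_iff [Semiring R] [NoZeroDivisors R] {e n : ℕ} {w : ι → R}
    {Q : ι → R[X]} (hQ : HasLeadingTerm e w Q) (hw : w ≠ 0) {h : R[X]} :
    h • Q ∈ vecLT ι R (n + e) ↔ h ∈ degreeLT R n := by
  rw [mem_vecLT_iff, mem_degreeLT]
  simp only [Pi.smul_apply, smul_eq_mul, degree_mul, Nat.cast_add]
  refine ⟨fun H => ?_, fun H i => ?_⟩
  · obtain ⟨i, hi⟩ := hQ.exists_degree_eq hw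
    exact lt_of_add_lt_add_right (hi ▸ H i)
  · calc h.degree + (Q i).degree ≤ h.degree + e := by
          gcongr; exact natDegree_le_iff_degree_le.1 (hQ i).1
      _ < n + e := WithBot.add_lt_add_right (WithBot.natCast_ne_bot e) H

/-- The coefficients of a vector of polynomials of degree less than `n`. -/
noncomputable def vecLTEquiv (ι R : Type*) [CommRing R] (n : ℕ) :
    vecLT ι R n ≃ₗ[R] (ι → Fin n → R) :=
  LinearEquiv.trans
    { toFun := fun c i => ⟨c.1 i, c.2 i (Set.mem_univ i)⟩
      invFun := fun c => ⟨fun i => c i, fun i _ => (c i).2⟩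
      map_add' := fun _ _ => rfl
      map_smul' := fun _ _ => rfl }
    (LinearEquiv.piCongrRight fun _ => degreeLTEquiv R n)

theorem finrank_vecLT (ι F : Type*) [Fintype ι] [Field F] (n : ℕ) :
    Module.finrank F (vecLT ι F n) = Fintype.card ι * n := by
  simp [(vecLTEquiv ι F n).finrank_eq, Module.finrank_pi_fintype]

instance (ι F : Type*) [Finite ι] [Field F] (n : ℕ) : Module.Finite F (vecLT ι F n) :=
  Module.Finite.equiv (vecLTEquiv ι F n).symm

theorem finite_vecLT (ι F : Type*) [Finite ι] [Field F] [Finite F] (n : ℕ) :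
    (vecLT ι F n : Set (ι → F[X])).Finite :=
  Module.finite_of_finite F (M := vecLT ι F n)

end LeadingTerm

section Syzygies

variable {ι F : Type*} [Fintype ι] [Field F]

/-- The syzygies of degree less than `n` of a vector of polynomials. -/
noncomputable def syzygies (n : ℕ) (c : ι → F[X]) : Submodule F (ι → F[X]) :=
  vecLT ι F n ⊓ (dotProductBilin F F c).ker

theorem mem_syzygies {n : ℕ} {c Q : ι → F[X]} :
    Q ∈ syzygies n c ↔ Q ∈ vecLT ι F n ∧ c ⬝ᵥ Q = 0 := by
  rw [syzygies, Submodule.mem_inf, LinearMap.mem_ker, dotProductBilin_apply_apply]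

instance (n : ℕ) (c : ι → F[X]) : Module.Finite F (syzygies n c) :=
  Submodule.finiteDimensional_of_le (inf_le_left : _ ≤ vecLT ι F n)

theorem syzygies_zero (n : ℕ) : syzygies n (0 : ι → F[X]) = vecLT ι F n := by
  ext Q
  simp [mem_syzygies]

/-- Reducing the `i`-th entry modulo `Q j`, for `i ≠ j`, amounts to subtracting a multiple of the
Koszul syzygy that has `Q j` in position `i` and `-Q i` in position `j`. -/
theorem IsUnimodular.exists_dotProduct_eq {Q : ι → F[X]} (hQ : IsUnimodular Q) {j : ι}
    (hj : Q j ≠ 0) (t : F[X]) :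
    ∃ c, Q ⬝ᵥ c = t ∧ ∀ i ≠ j, (c i).degree < (Q j).degree := by
  classical
  obtain ⟨u, hu⟩ := hQ
  let k : ι → F[X] := fun i => t * u i / Q j
  let c : ι → F[X] := t • u - (Q j • k - Pi.single j (Q ⬝ᵥ k))
  refine ⟨c, ?_, fun i hi => ?_⟩
  · simp only [c, dotProduct_sub, dotProduct_smul, dotProduct_single, dotProduct_comm Q u, hu,
      smul_eq_mul]
    ring
  · have hci : c i = t * u i % Q j := by
      simp [c, k, hi, EuclideanDomain.mod_eq_sub_mul_div]
    rw [hci]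
    exact EuclideanDomain.mod_lt _ hj

theorem IsUnimodular.map_dotProduct_vecLT {D e : ℕ} {w : ι → F} {Q : ι → F[X]}
    (hQ : IsUnimodular Q) (hlead : HasLeadingTerm e w Q) (hw : w ≠ 0) (he : e ≤ D) :
    (vecLT ι F D).map (dotProductBilin F F Q) = degreeLT F (e + D) := by
  classical
  have hlt : ∀ {n : ℕ} {c : ι → F[X]}, c ∈ vecLT ι F n → (Q ⬝ᵥ c).degree < (e + n : ℕ) :=
    fun hc => hlead.degree_dotProduct_lt (hasLeadingTerm_zero_iff_mem_vecLT.2 hc) (by simp)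
  refine le_antisymm (Submodule.map_le_iff_le_comap.2 fun c hc => ?_) fun t ht => ?_
  · exact mem_degreeLT.2 (hlt hc)
  obtain ⟨j, hj⟩ := hlead.exists_degree_eq hw
  have hj0 : Q j ≠ 0 := fun h0 => by simp [h0] at hj
  obtain ⟨c, hct, hc⟩ := hQ.exists_dotProduct_eq hj0 t
  rw [hj] at hc
  refine ⟨c, mem_vecLT_iff.2 fun i => ?_, hct⟩
  obtain rfl | hij := eq_or_ne i j
  · have hrest : Function.update c i 0 ∈ vecLT ι F e := mem_vecLT_iff.2 fun k => by
      obtain rfl | hk := eq_or_ne k i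
      · simp
      · simpa [hk] using hc k hk
    have hci : Q i * c i = t - Q ⬝ᵥ Function.update c i 0 := by
      rw [← hct, ← dotProduct_sub, ← dotProduct_single]
      congr 1
      ext k : 1
      obtain rfl | hk := eq_or_ne k i <;> simp [*]
    have : (Q i * c i).degree < (e + D : ℕ) := by
      rw [hci]
      refine (degree_sub_le _ _).trans_lt (max_lt (mem_degreeLT.1 ht) ((hlt hrest).trans_le ?_))
      exact_mod_cast Nat.add_le_add_left he e
    rw [degree_mul, hj, Nat.cast_add] at this
    exact lt_of_add_lt_add_left this
  · exact (hc i hij).trans_le (by exact_mod_cast he)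

theorem finrank_syzygies_add {D e : ℕ} {w : ι → F} {Q : ι → F[X]} (hQ : IsUnimodular Q)
    (hlead : HasLeadingTerm e w Q) (hw : w ≠ 0) (he : e ≤ D) :
    Module.finrank F (syzygies D Q) + (e + D) = Fintype.card ι * D := by
  have := LinearMap.finrank_range_add_finrank_ker
    ((dotProductBilin F F Q : (ι → F[X]) →ₗ[F] F[X]).domRestrict (vecLT ι F D))
  rw [LinearMap.range_domRestrict, LinearMap.ker_domRestrict,
    hQ.map_dotProduct_vecLT hlead hw he, (degreeLTEquiv F (e + D)).finrank_eq,
    Module.finrank_fin_fun, finrank_vecLT, ← Submodule.finrank_map_subtype_eq,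
    Submodule.map_comap_subtype] at this
  rw [add_comm, ← this]
  rfl

end Syzygies

section Content

variable {ι F : Type*} [Fintype ι] [Field F]

theorem exists_eq_monic_smul_isUnimodular {c : ι → F[X]} (hc : c ≠ 0) :
    ∃ (h : F[X]) (c' : ι → F[X]), h.Monic ∧ IsUnimodular c' ∧ c = h • c' := by
  obtain ⟨d, c', hc', rfl⟩ := exists_eq_smul_isUnimodular hc
  have hd : d.leadingCoeff ≠ 0 := leadingCoeff_ne_zero.2 (left_ne_zero_of_smul hc)
  refine ⟨d * C d.leadingCoeff⁻¹, C d.leadingCoeff • c',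
    monic_mul_leadingCoeff_inv (left_ne_zero_of_smul hc),
    hc'.smul (isUnit_C.2 hd.isUnit), ?_⟩
  rw [smul_smul, mul_assoc, ← C_mul, inv_mul_cancel₀ hd, C_1, mul_one]

theorem IsUnimodular.eq_of_monic_smul_eq {h h' : F[X]} {c c' : ι → F[X]} (hh : h.Monic)
    (hh' : h'.Monic) (hc : IsUnimodular c) (hc' : IsUnimodular c') (heq : h • c = h' • c') :
    h = h' ∧ c = c' := by
  have hdvd : h ∣ h' := hc'.dvd_of_forall_dvd_mul fun i => ⟨c i, (congrFun heq i).symm⟩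
  have hdvd' : h' ∣ h := hc.dvd_of_forall_dvd_mul fun i => ⟨c' i, congrFun heq i⟩
  obtain rfl := eq_of_monic_of_associated hh hh' (associated_of_dvd_dvd hdvd hdvd')
  exact ⟨rfl, smul_right_injective _ hh.ne_zero heq⟩

/-- The vectors of polynomials with degree-`D` term `v X ^ D` that are orthogonal to `Q`. All
vectors with this term are obtained by taking `Q = 0`. -/
def orthogonalSet (Q : ι → F[X]) (D : ℕ) (v : ι → F) : Set (ι → F[X]) :=
  {c | HasLeadingTerm D v c ∧ Q ⬝ᵥ c = 0}

variable {Q c : ι → F[X]} {D : ℕ} {v : ι → F}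

theorem monic_smul_mem_orthogonalSet {h : F[X]} (hh : h.Monic) :
    h • c ∈ orthogonalSet Q (h.natDegree + D) v ↔ c ∈ orthogonalSet Q D v := by
  simp only [orthogonalSet, Set.mem_ofPred_eq, HasLeadingTerm.smul_iff hh, dotProduct_smul,
    smul_eq_mul, mul_eq_zero, hh.ne_zero, false_or]

theorem orthogonalSet_eq_image_smul (hv : v ≠ 0) :
    orthogonalSet Q D v = (fun p : F[X] × (ι → F[X]) => p.1 • p.2) ''
      {p | p.1.Monic ∧ p.1.natDegree ≤ D ∧
        p.2 ∈ orthogonalSet Q (D - p.1.natDegree) v ∧ IsUnimodular p.2} := by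
  ext c
  constructor
  · intro hc
    obtain ⟨h, c', hh, hc', rfl⟩ := exists_eq_monic_smul_isUnimodular (hc.1.ne_zero hv)
    have hdeg : h.natDegree ≤ D := by
      obtain ⟨i, hi⟩ := hc.1.exists_degree_eq hv
      have hne : (h • c') i ≠ 0 := fun h0 => by simp [h0] at hi
      exact (natDegree_le_of_dvd ⟨c' i, rfl⟩ hne).trans (hc.1 i).1
    refine ⟨(h, c'), ⟨hh, hdeg, ?_, hc'⟩, rfl⟩
    rwa [← monic_smul_mem_orthogonalSet hh, Nat.add_sub_cancel' hdeg]
  · rintro ⟨⟨h, c'⟩, ⟨hh, hdeg, hc', -⟩, rfl⟩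
    rwa [← monic_smul_mem_orthogonalSet hh, Nat.add_sub_cancel' hdeg] at hc'

theorem ncard_orthogonalSet (hc : c ∈ orthogonalSet Q D v) :
    (orthogonalSet Q D v).ncard = Nat.card F ^ Module.finrank F (syzygies D Q) := by
  rw [← Module.natCard_eq_pow_finrank, ← SetLike.coe_sort_coe, Nat.card_coe_set_eq,
    ← Set.ncard_image_of_injective _ (add_left_injective (-c))]
  congr 1
  ext d
  simp only [Set.image_add_right, neg_neg, Set.mem_preimage, SetLike.mem_coe, mem_syzygies]
  change HasLeadingTerm D v (d + c) ∧ Q ⬝ᵥ (d + c) = 0 ↔ _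
  rw [hc.1.hasLeadingTerm_iff_sub_mem, add_sub_cancel_right, dotProduct_add, hc.2, add_zero]

theorem ncard_monic_natDegree_eq (n : ℕ) :
    {p : F[X] | p.Monic ∧ p.natDegree = n}.ncard = Nat.card F ^ n := by
  rw [← Nat.card_coe_set_eq]
  refine (Nat.card_congr ((monicEquivDegreeLT n).trans (degreeLTEquiv F n).toEquiv)).trans ?_
  rw [Nat.card_fun, Nat.card_fin]

variable [Finite F]

theorem finite_orthogonalSet (Q : ι → F[X]) (D : ℕ) (v : ι → F) :
    (orthogonalSet Q D v).Finite :=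
  (finite_vecLT ι F (D + 1)).subset fun _ hc => hc.1.mem_vecLT D.lt_succ_self

theorem ncard_orthogonalSet_eq_sum (hv : v ≠ 0) :
    (orthogonalSet Q D v).ncard = ∑ k ∈ Finset.range (D + 1),
      Nat.card F ^ k * {c ∈ orthogonalSet Q (D - k) v | IsUnimodular c}.ncard := by
  have hinj : Set.InjOn (fun p : F[X] × (ι → F[X]) => p.1 • p.2)
      {p | p.1.Monic ∧ p.1.natDegree ≤ D ∧
        p.2 ∈ orthogonalSet Q (D - p.1.natDegree) v ∧ IsUnimodular p.2} :=
    fun p hp p' hp' heq => Prod.ext_iff.2 <|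
      hp.2.2.2.eq_of_monic_smul_eq hp.1 hp'.1 hp'.2.2.2 heq
  have hfin := (orthogonalSet_eq_image_smul hv ▸ finite_orthogonalSet Q D v).of_finite_image hinj
  rw [orthogonalSet_eq_image_smul hv, hinj.ncard_image,
    ncard_eq_sum_ncard_fiber hfin (fun p => p.1.natDegree) (Finset.range (D + 1))
      fun p hp => Finset.mem_range_succ_iff.2 hp.2.1]
  refine Finset.sum_congr rfl fun k hk => ?_
  rw [← ncard_monic_natDegree_eq, ← Set.ncard_prod]
  congr 1
  ext ⟨h, c⟩
  have := Finset.mem_range_succ_iff.1 hk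
  constructor
  · rintro ⟨⟨hh, -, hc, hc'⟩, rfl⟩
    exact ⟨⟨hh, rfl⟩, hc, hc'⟩
  · rintro ⟨⟨hh, rfl⟩, hc, hc'⟩
    exact ⟨⟨hh, this, hc, hc'⟩, rfl⟩

theorem ncard_isUnimodular_orthogonalSet_zero (hv : v ≠ 0) :
    {c ∈ orthogonalSet Q 0 v | IsUnimodular c}.ncard = (orthogonalSet Q 0 v).ncard := by
  simp [ncard_orthogonalSet_eq_sum hv]

theorem ncard_orthogonalSet_succ (hv : v ≠ 0) :
    (orthogonalSet Q (D + 1) v).ncard =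
      {c ∈ orthogonalSet Q (D + 1) v | IsUnimodular c}.ncard +
        Nat.card F * (orthogonalSet Q D v).ncard := by
  rw [ncard_orthogonalSet_eq_sum hv, ncard_orthogonalSet_eq_sum (D := D) hv,
    Finset.sum_range_succ', add_comm, pow_zero, one_mul, Nat.sub_zero, Finset.mul_sum]
  simp only [Nat.add_sub_add_right, pow_succ', mul_assoc]

theorem cast_ncard_isUnimodular_orthogonalSet_succ (hv : v ≠ 0) :
    ({c ∈ orthogonalSet Q (D + 1) v | IsUnimodular c}.ncard : ℚ) =
      (orthogonalSet Q (D + 1) v).ncard - Nat.card F * (orthogonalSet Q D v).ncard := by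
  rw [ncard_orthogonalSet_succ hv]
  push_cast
  ring

end Content

section UnimodularCount

variable {ι F : Type*} [Fintype ι] [Field F] {D e : ℕ} {v w : ι → F}

theorem ncard_orthogonalSet_zero (D : ℕ) (v : ι → F) :
    (orthogonalSet 0 D v).ncard = Nat.card F ^ (Fintype.card ι * D) := by
  rw [ncard_orthogonalSet ⟨hasLeadingTerm_monomial D v, zero_dotProduct _⟩, syzygies_zero,
    finrank_vecLT]

theorem ncard_orthogonalSet_of_dotProduct_eq_zero {Q : ι → F[X]} (hQ : IsUnimodular Q)
    (hlead : HasLeadingTerm e w Q) (hw : w ≠ 0) (he : e ≤ D) (hwv : w ⬝ᵥ v = 0) :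
    ((orthogonalSet Q D v).ncard : ℚ) =
      (Nat.card F : ℚ) ^ ((Fintype.card ι - 1) * D - e : ℤ) := by
  have hv := hasLeadingTerm_monomial D v
  obtain ⟨c, hc, hQc⟩ : Q ⬝ᵥ (fun i => monomial D (v i)) ∈
      (vecLT ι F D).map (dotProductBilin F F Q) := by
    rw [hQ.map_dotProduct_vecLT hlead hw he, mem_degreeLT]
    exact hlead.degree_dotProduct_lt hv hwv
  have hmem : (fun i => monomial D (v i)) - c ∈ orthogonalSet Q D v := by
    refine ⟨hv.hasLeadingTerm_iff_sub_mem.2 (by simpa using hc), ?_⟩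
    rw [dotProduct_sub, sub_eq_zero]
    exact hQc.symm
  have hrank := finrank_syzygies_add hQ hlead hw he
  rw [ncard_orthogonalSet hmem, Nat.cast_pow, ← zpow_natCast]
  congr 1
  zify at hrank
  linear_combination hrank

variable [Finite F]

theorem ncard_isUnimodular_hasLeadingTerm (D : ℕ) (hv : v ≠ 0) :
    ({c : ι → F[X] | HasLeadingTerm D v c ∧ IsUnimodular c}.ncard : ℚ) =
      (Nat.card F : ℚ) ^ (Fintype.card ι * D) *
        if D = 0 then 1 else 1 - (Nat.card F : ℚ) ^ (1 - Fintype.card ι : ℤ) := by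
  have hq : (Nat.card F : ℚ) ≠ 0 := Nat.cast_ne_zero.2 Finite.card_pos.ne'
  have hset : {c : ι → F[X] | HasLeadingTerm D v c ∧ IsUnimodular c} =
      {c ∈ orthogonalSet 0 D v | IsUnimodular c} := by
    simp [orthogonalSet]
  rw [hset]
  obtain _ | D := D
  · simp [ncard_isUnimodular_orthogonalSet_zero hv, ncard_orthogonalSet_zero]
  · rw [cast_ncard_isUnimodular_orthogonalSet_succ hv, ncard_orthogonalSet_zero,
      ncard_orthogonalSet_zero, if_neg D.succ_ne_zero, zpow_sub₀ hq]
    push_cast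
    rw [zpow_one, zpow_natCast]
    field_simp
    ring

theorem ncard_isUnimodular_orthogonalSet {Q : ι → F[X]} (hQ : IsUnimodular Q)
    (hlead : HasLeadingTerm e w Q) (hw : w ≠ 0) (he : e < D) (hv : v ≠ 0) (hwv : w ⬝ᵥ v = 0) :
    ({c ∈ orthogonalSet Q D v | IsUnimodular c}.ncard : ℚ) =
      (Nat.card F : ℚ) ^ ((Fintype.card ι - 1) * D - e : ℤ) *
        (1 - (Nat.card F : ℚ) ^ (2 - Fintype.card ι : ℤ)) := by
  have hq : (Nat.card F : ℚ) ≠ 0 := Nat.cast_ne_zero.2 Finite.card_pos.ne'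
  obtain _ | D := D
  · exact absurd he e.not_lt_zero
  rw [cast_ncard_isUnimodular_orthogonalSet_succ hv,
    ncard_orthogonalSet_of_dotProduct_eq_zero hQ hlead hw he.le hwv,
    ncard_orthogonalSet_of_dotProduct_eq_zero hQ hlead hw (Nat.le_of_lt_succ he) hwv,
    mul_sub, mul_one, ← zpow_add₀ hq, ← zpow_one_add₀ hq]
  congr 2
  push_cast
  ring

end UnimodularCount

section TernarySyzygies

variable {F : Type*} [Field F]

theorem cross_mem_vecLT {m n : ℕ} {Q Q' : Fin 3 → F[X]} (hQ : Q ∈ vecLT (Fin 3) F m)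
    (hQ' : Q' ∈ vecLT (Fin 3) F n) : Q ⨯₃ Q' ∈ vecLT (Fin 3) F (m + n) := by
  rw [mem_vecLT_iff] at hQ hQ'
  have hmul : ∀ i j, Q i * Q' j ∈ degreeLT F (m + n) := fun i j => by
    rw [mem_degreeLT, degree_mul, Nat.cast_add]
    calc (Q i).degree + (Q' j).degree ≤ (Q i).degree + n := by gcongr; exact (hQ' j).le
      _ < m + n := WithBot.add_lt_add_right (WithBot.natCast_ne_bot n) (hQ i)
  refine fun i _ => ?_
  rw [cross_apply]
  fin_cases i <;> exact sub_mem (hmul _ _) (hmul _ _)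

/-- The unimodular syzygies of `c` of degree exactly `e`. -/
def unimodularSyzygies {ι : Type*} [Fintype ι] (e : ℕ) (c : ι → F[X]) : Set (ι → F[X]) :=
  {Q | c ⬝ᵥ Q = 0 ∧ IsUnimodular Q ∧ ∃ w ≠ 0, HasLeadingTerm e w Q}

theorem exists_unimodularSyzygies_nonempty {ι : Type*} [Fintype ι] {n : ℕ} {c : ι → F[X]}
    (h : syzygies n c ≠ ⊥) : ∃ e < n, (unimodularSyzygies e c).Nonempty := by
  obtain ⟨Q', hQ', hne⟩ := Submodule.exists_mem_ne_zero_of_ne_bot h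
  rw [mem_syzygies] at hQ'
  obtain ⟨d, Q, hd, hQ, rfl⟩ := exists_eq_monic_smul_isUnimodular hne
  obtain ⟨e, w, hw, hlead⟩ := exists_hasLeadingTerm hQ.ne_zero
  refine ⟨e, ?_, Q, ?_, hQ, w, hw, hlead⟩
  · have := ((HasLeadingTerm.smul_iff hd).2 hlead).lt_of_mem_vecLT hw hQ'.1
    lia
  · simpa [dotProduct_smul, hd.ne_zero] using hQ'.2

section Unimodular

variable {M e : ℕ} {v : Fin 3 → F} {c : Fin 3 → F[X]}

theorem cross_eq_zero_of_mem_syzygies (hc : IsUnimodular c) (hlead : HasLeadingTerm (2 * M) v c)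
    (hv : v ≠ 0) {Q Q' : Fin 3 → F[X]} (hQ : Q ∈ syzygies M c) (hQ' : Q' ∈ syzygies M c) :
    Q ⨯₃ Q' = 0 := by
  rw [mem_syzygies] at hQ hQ'
  have hcross : c ⨯₃ (Q ⨯₃ Q') = 0 := by
    rw [cross_cross_eq_smul_sub_smul', hQ'.2, dotProduct_comm Q c, hQ.2, zero_smul, zero_smul,
      sub_zero]
  obtain ⟨h, hh⟩ := hc.exists_eq_smul_of_cross_eq_zero hcross
  have hmem : h • c ∈ vecLT (Fin 3) F (0 + 2 * M) := by
    rw [← hh, zero_add, two_mul]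
    exact cross_mem_vecLT hQ.1 hQ'.1
  rw [hlead.smul_mem_vecLT_iff hv, mem_degreeLT, Nat.cast_zero, Nat.WithBot.lt_zero_iff,
    degree_eq_bot] at hmem
  rw [hh, hmem, zero_smul]

theorem exists_eq_smul_of_mem_syzygies (hc : IsUnimodular c) (hlead : HasLeadingTerm (2 * M) v c)
    (hv : v ≠ 0) {Q Q' : Fin 3 → F[X]} (hunimod : IsUnimodular Q) (hQ : Q ∈ syzygies M c)
    (hQ' : Q' ∈ syzygies M c) : ∃ h : F[X], Q' = h • Q :=
  hunimod.exists_eq_smul_of_cross_eq_zero (cross_eq_zero_of_mem_syzygies hc hlead hv hQ hQ')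

theorem mem_syzygies_of_mem_unimodularSyzygies {ι : Type*} [Fintype ι] {c Q : ι → F[X]}
    (hQ : Q ∈ unimodularSyzygies e c) (he : e < M) : Q ∈ syzygies M c :=
  have ⟨hdot, _, _, _, hlead⟩ := hQ
  mem_syzygies.2 ⟨hlead.mem_vecLT he, hdot⟩

theorem syzygies_eq_map_toSpanSingleton (hc : IsUnimodular c)
    (hlead : HasLeadingTerm (2 * M) v c) (hv : v ≠ 0) {Q : Fin 3 → F[X]}
    (hQ : Q ∈ unimodularSyzygies e c) (he : e < M) :
    syzygies M c = (degreeLT F (M - e)).map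
      ((LinearMap.toSpanSingleton F[X] (Fin 3 → F[X]) Q).restrictScalars F) := by
  obtain ⟨hdot, hunimod, w, hw, hQlead⟩ := id hQ
  have hmem : ∀ h : F[X], h • Q ∈ syzygies M c ↔ h ∈ degreeLT F (M - e) := fun h => by
    rw [← hQlead.smul_mem_vecLT_iff hw, Nat.sub_add_cancel he.le, mem_syzygies, dotProduct_smul,
      hdot, smul_zero, and_iff_left rfl]
  ext Q'
  constructor
  · intro hQ'
    obtain ⟨h, rfl⟩ := exists_eq_smul_of_mem_syzygies hc hlead hv hunimod
      (mem_syzygies_of_mem_unimodularSyzygies hQ he) hQ'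
    exact ⟨h, (hmem h).1 hQ', rfl⟩
  · rintro ⟨h, hh, rfl⟩
    exact (hmem h).2 hh

theorem finrank_syzygies_of_mem_unimodularSyzygies (hc : IsUnimodular c)
    (hlead : HasLeadingTerm (2 * M) v c) (hv : v ≠ 0) {Q : Fin 3 → F[X]}
    (hQ : Q ∈ unimodularSyzygies e c) (he : e < M) :
    Module.finrank F (syzygies M c) = M - e := by
  rw [syzygies_eq_map_toSpanSingleton hc hlead hv hQ he, LinearEquiv.finrank_eq
    (Submodule.equivMapOfInjective _ (smul_left_injective _ hQ.2.1.ne_zero) _).symm,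
    (degreeLTEquiv F (M - e)).finrank_eq, Module.finrank_fin_fun]

theorem finrank_syzygies_le (hc : IsUnimodular c) (hlead : HasLeadingTerm (2 * M) v c)
    (hv : v ≠ 0) : Module.finrank F (syzygies M c) ≤ M := by
  by_cases h : syzygies M c = ⊥
  · rw [h, finrank_bot]
    exact M.zero_le
  · obtain ⟨e, he, Q, hQ⟩ := exists_unimodularSyzygies_nonempty h
    exact (finrank_syzygies_of_mem_unimodularSyzygies hc hlead hv hQ he).trans_le (M.sub_le e)

theorem unimodularSyzygies_nonempty (hc : IsUnimodular c) (hlead : HasLeadingTerm (2 * M) v c)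
    (hv : v ≠ 0) (he : e < M) (hrank : Module.finrank F (syzygies M c) = M - e) :
    (unimodularSyzygies e c).Nonempty := by
  have hne : syzygies M c ≠ ⊥ := fun h => by
    rw [h, finrank_bot] at hrank
    lia
  obtain ⟨e', he', Q, hQ⟩ := exists_unimodularSyzygies_nonempty hne
  have := finrank_syzygies_of_mem_unimodularSyzygies hc hlead hv hQ he'
  obtain rfl : e = e' := by lia
  exact ⟨Q, hQ⟩

theorem smul_mem_unimodularSyzygies {ι : Type*} [Fintype ι] {c Q : ι → F[X]}
    (hQ : Q ∈ unimodularSyzygies e c) (x : Fˣ) : C (x : F) • Q ∈ unimodularSyzygies e c := by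
  obtain ⟨hdot, hunimod, w, hw, hlead⟩ := hQ
  refine ⟨by rw [dotProduct_smul, hdot, smul_zero], hunimod.smul (isUnit_C.2 x.isUnit),
    (x : F) • w, smul_ne_zero x.ne_zero hw, fun i => ⟨?_, ?_⟩⟩
  · exact (natDegree_C_mul_le _ _).trans (hlead i).1
  · rw [Pi.smul_apply, smul_eq_mul, coeff_C_mul, (hlead i).2, Pi.smul_apply, smul_eq_mul]

theorem unimodularSyzygies_eq_range (hc : IsUnimodular c) (hlead : HasLeadingTerm (2 * M) v c)
    (hv : v ≠ 0) (he : e < M) {Q : Fin 3 → F[X]} (hQ : Q ∈ unimodularSyzygies e c) :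
    unimodularSyzygies e c = Set.range fun x : Fˣ => C (x : F) • Q := by
  refine Set.Subset.antisymm (fun Q' hQ' => ?_) ?_
  · obtain ⟨h, rfl⟩ := exists_eq_smul_of_mem_syzygies hc hlead hv hQ.2.1
      (mem_syzygies_of_mem_unimodularSyzygies hQ he)
      (mem_syzygies_of_mem_unimodularSyzygies hQ' he)
    have hh : IsUnit h := isUnimodular_iff_forall_dvd_isUnit.1 hQ'.2.1 h fun i => ⟨Q i, rfl⟩
    obtain ⟨x, hx, rfl⟩ := Polynomial.isUnit_iff.1 hh
    exact ⟨hx.unit, rfl⟩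
  · rintro _ ⟨x, rfl⟩
    exact smul_mem_unimodularSyzygies hQ x

theorem ncard_unimodularSyzygies (hc : IsUnimodular c) (hlead : HasLeadingTerm (2 * M) v c)
    (hv : v ≠ 0) (he : e < M) (hrank : Module.finrank F (syzygies M c) = M - e) :
    (unimodularSyzygies e c).ncard = Nat.card F - 1 := by
  obtain ⟨Q, hQ⟩ := unimodularSyzygies_nonempty hc hlead hv he hrank
  have hinj : Function.Injective fun x : Fˣ => C (x : F) • Q := fun x y hxy =>
    Units.ext (C_injective (smul_left_injective _ hQ.2.1.ne_zero hxy))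
  rw [unimodularSyzygies_eq_range hc hlead hv he hQ, ← Nat.card_coe_set_eq,
    ← Nat.card_congr (Equiv.ofInjective _ hinj), Nat.card_units]

end Unimodular

end TernarySyzygies

section FinrankCount

variable {ι F : Type*} [Fintype ι] [Field F]

theorem ncard_ne_zero_dotProduct_eq_zero {v : ι → F} (hv : v ≠ 0) :
    {w : ι → F | w ≠ 0 ∧ w ⬝ᵥ v = 0}.ncard = Nat.card F ^ (Fintype.card ι - 1) - 1 := by
  have hker : Module.finrank F (dotProductBilin F F v).ker = Fintype.card ι - 1 := by
    classical
    have := Module.Dual.finrank_ker_add_one_of_ne_zero (f := dotProductBilin F F v) fun h =>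
      hv (dotProduct_eq_zero v fun w => LinearMap.congr_fun h w)
    rw [Module.finrank_fintype_fun_eq_card] at this
    lia
  have hset : {w : ι → F | w ≠ 0 ∧ w ⬝ᵥ v = 0} =
      ((dotProductBilin F F v).ker : Set (ι → F)) \ {0} := by
    ext w
    simp [dotProduct_comm w v, and_comm]
  rw [hset, Set.ncard_sdiff_singleton_of_mem (zero_mem _), ← Nat.card_coe_set_eq,
    SetLike.coe_sort_coe, Module.natCard_eq_pow_finrank (K := F), hker]

/-- The unimodular vectors of exact degree `e` with leading vector orthogonal to `v`. -/
def unimodularVecs (e : ℕ) (v : ι → F) : Set (ι → F[X]) :=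
  {Q | IsUnimodular Q ∧ ∃ w ≠ 0, w ⬝ᵥ v = 0 ∧ HasLeadingTerm e w Q}

theorem sep_unimodularVecs_eq {D e : ℕ} {v : ι → F} {c : ι → F[X]}
    (hlead : HasLeadingTerm D v c) :
    {Q ∈ unimodularVecs e v | c ⬝ᵥ Q = 0} = unimodularSyzygies e c := by
  ext Q
  constructor
  · rintro ⟨⟨hQ, w, hw, -, hQlead⟩, hdot⟩
    exact ⟨hdot, hQ, w, hw, hQlead⟩
  · rintro ⟨hdot, hQ, w, hw, hQlead⟩
    refine ⟨⟨hQ, w, hw, ?_, hQlead⟩, hdot⟩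
    rw [← hQlead.coeff_dotProduct hlead, dotProduct_comm, hdot, coeff_zero]

theorem finite_unimodularVecs [Finite F] (e : ℕ) (v : ι → F) :
    (unimodularVecs e v).Finite :=
  (finite_vecLT ι F (e + 1)).subset fun _ hQ =>
    have ⟨_, _, _, _, hlead⟩ := hQ
    hlead.mem_vecLT e.lt_succ_self

theorem ncard_unimodularVecs [Finite F] (e : ℕ) {v : ι → F} (hv : v ≠ 0) :
    ((unimodularVecs e v).ncard : ℚ) = ((Nat.card F : ℚ) ^ (Fintype.card ι - 1) - 1) *
      ((Nat.card F : ℚ) ^ (Fintype.card ι * e) *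
        if e = 0 then 1 else 1 - (Nat.card F : ℚ) ^ (1 - Fintype.card ι : ℤ)) := by
  have hfiber : ∀ w ∈ {w : ι → F | w ≠ 0 ∧ w ⬝ᵥ v = 0},
      {Q ∈ unimodularVecs e v | (fun i => (Q i).coeff e) = w} =
        {Q | HasLeadingTerm e w Q ∧ IsUnimodular Q} := by
    rintro w ⟨hw, hwv⟩
    ext Q
    constructor
    · rintro ⟨⟨hQ, w', -, -, hlead⟩, rfl⟩
      exact ⟨hlead.eq_coeff ▸ hlead, hQ⟩
    · rintro ⟨hlead, hQ⟩
      exact ⟨⟨hQ, w, hw, hwv, hlead⟩, hlead.eq_coeff.symm⟩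
  rw [ncard_eq_ncard_mul_of_fiber (finite_unimodularVecs e v) (Set.toFinite _)
      (fun Q i => (Q i).coeff e) ?_
      fun w hw => (congrArg _ (congrArg _ (hfiber w hw))).trans
        (ncard_isUnimodular_hasLeadingTerm e hw.1),
    ncard_ne_zero_dotProduct_eq_zero hv, Nat.cast_sub (Nat.one_le_pow _ _ Finite.card_pos),
    Nat.cast_pow, Nat.cast_one]
  · rintro Q ⟨-, w, hw, hwv, hlead⟩
    rw [← hlead.eq_coeff]
    exact ⟨hw, hwv⟩

variable {M a e : ℕ} {v : Fin 3 → F}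

/-- The unimodular ternary vectors with term `v X ^ (2 * M)` of degree `2 * M` whose syzygies of
degree less than `M` form a space of dimension `a`. -/
def unimodularFinrankEq (M a : ℕ) (v : Fin 3 → F) : Set (Fin 3 → F[X]) :=
  {c | HasLeadingTerm (2 * M) v c ∧ IsUnimodular c ∧ Module.finrank F (syzygies M c) = a}

theorem sep_unimodularFinrankEq_eq (hv : v ≠ 0) (he : e < M) {w : Fin 3 → F}
    {Q : Fin 3 → F[X]} (hQ : IsUnimodular Q) (hQlead : HasLeadingTerm e w Q) (hw : w ≠ 0) :
    {c ∈ unimodularFinrankEq M (M - e) v | c ⬝ᵥ Q = 0} =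
      {c ∈ orthogonalSet Q (2 * M) v | IsUnimodular c} := by
  ext c
  constructor
  · rintro ⟨⟨hlead, hc, -⟩, hdot⟩
    exact ⟨⟨hlead, (dotProduct_comm _ _).trans hdot⟩, hc⟩
  · rintro ⟨⟨hlead, hdot⟩, hc⟩
    rw [dotProduct_comm] at hdot
    exact ⟨⟨hlead, hc, finrank_syzygies_of_mem_unimodularSyzygies hc hlead hv
      ⟨hdot, hQ, w, hw, hQlead⟩ he⟩, hdot⟩

variable [Finite F]

theorem finite_unimodularFinrankEq (M a : ℕ) (v : Fin 3 → F) :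
    (unimodularFinrankEq M a v).Finite :=
  (finite_vecLT (Fin 3) F (2 * M + 1)).subset fun _ hc => hc.1.mem_vecLT (Nat.lt_succ_self _)

theorem ncard_unimodularFinrankEq_mul (hv : v ≠ 0) (he : e < M) :
    ((unimodularFinrankEq M (M - e) v).ncard : ℚ) * (Nat.card F - 1) =
      (unimodularVecs e v).ncard *
        ((Nat.card F : ℚ) ^ (4 * M - e : ℤ) * (1 - (Nat.card F : ℚ) ^ (-1 : ℤ))) := by
  refine ncard_mul_eq_ncard_mul (finite_unimodularFinrankEq M (M - e) v)
    (finite_unimodularVecs e v) (fun c Q => c ⬝ᵥ Q = 0) ?_ ?_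
  · rintro c ⟨hlead, hc, hrank⟩
    rw [sep_unimodularVecs_eq hlead, ncard_unimodularSyzygies hc hlead hv he hrank,
      Nat.cast_pred Finite.card_pos]
  · rintro Q ⟨hQ, w, hw, hwv, hQlead⟩
    rw [sep_unimodularFinrankEq_eq hv he hQ hQlead hw,
      ncard_isUnimodular_orthogonalSet hQ hQlead hw (by lia) hv hwv]
    push_cast [Fintype.card_fin]
    ring_nf

/-- The asserted proportion of vectors with a given `a`-number, where `M = ⌊(g + 1) / 3⌋`. -/
def aNumberDensity (q : ℚ) (M a : ℕ) : ℚ :=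
  if a = 0 then 1 - q⁻¹
  else if a < M then q ^ (1 - 2 * a : ℤ) * (1 - q ^ (-2 : ℤ))
  else if a = M then q ^ (1 - 2 * a : ℤ)
  else 0

theorem sum_aNumberDensity {q : ℚ} (hq : q ≠ 0) {M : ℕ} (hM : 0 < M) :
    ∑ a ∈ Finset.range (M + 1), aNumberDensity q M a = 1 := by
  have hsum : ∀ N < M, ∑ a ∈ Finset.range (N + 1), aNumberDensity q M a =
      1 - q ^ (-1 - 2 * N : ℤ) := fun N => by
    induction N with
    | zero => simp [aNumberDensity]
    | succ N ih =>
      intro hN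
      rw [Finset.sum_range_succ, ih (by lia), aNumberDensity, if_neg N.succ_ne_zero, if_pos hN]
      have h₁ : (-1 - 2 * N : ℤ) = 1 - 2 * (N + 1 : ℕ) := by push_cast; ring
      have h₂ : (-1 - 2 * (N + 1 : ℕ) : ℤ) = (1 - 2 * (N + 1 : ℕ)) + -2 := by ring
      rw [h₁, h₂, zpow_add₀ hq]
      ring
  obtain ⟨N, rfl⟩ := Nat.exists_eq_succ_of_ne_zero hM.ne'
  rw [Finset.sum_range_succ, hsum N N.lt_succ_self, aNumberDensity, if_neg N.succ_ne_zero,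
    if_neg (lt_irrefl _), if_pos rfl]
  push_cast
  ring_nf

theorem ncard_unimodularFinrankEq_of_pos (hv : v ≠ 0) (ha : 0 < a) (haM : a ≤ M) :
    ((unimodularFinrankEq M a v).ncard : ℚ) = aNumberDensity (Nat.card F) M a *
      ((Nat.card F : ℚ) ^ (6 * M) * (1 - (Nat.card F : ℚ) ^ (-2 : ℤ))) := by
  obtain ⟨e, rfl⟩ := Nat.exists_eq_add_of_le haM
  have h := ncard_unimodularFinrankEq_mul (M := a + e) (e := e) hv (by lia)
  rw [Nat.add_sub_cancel, ncard_unimodularVecs e hv, Fintype.card_fin,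
    show (1 - (3 : ℕ) : ℤ) = -2 from rfl] at h
  have hq : (1 : ℚ) < Nat.card F := by exact_mod_cast Finite.one_lt_card
  have hq₀ : (Nat.card F : ℚ) ≠ 0 := by positivity
  have hdens : aNumberDensity (Nat.card F) (a + e) a =
      Nat.card F / (Nat.card F : ℚ) ^ (2 * a) *
        if e = 0 then 1 else 1 - (Nat.card F : ℚ) ^ (-2 : ℤ) := by
    have hpow : (Nat.card F : ℚ) ^ (1 - 2 * a : ℤ) = Nat.card F / (Nat.card F : ℚ) ^ (2 * a) := by
      rw [zpow_sub₀ hq₀, zpow_one]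
      norm_cast
    rw [aNumberDensity, if_neg ha.ne', ← hpow]
    obtain rfl | he := Nat.eq_zero_or_pos e
    · simp
    · rw [if_pos (by lia), if_neg he.ne']
  have hpow : (Nat.card F : ℚ) ^ (4 * (a + e : ℕ) - e : ℤ) =
      (Nat.card F : ℚ) ^ (4 * a + 3 * e) := by
    rw [← zpow_natCast]
    congr 1
    push_cast
    ring
  rw [hdens]
  refine mul_right_cancel₀ (sub_ne_zero.2 hq.ne') (h.trans ?_)
  rw [hpow, zpow_neg_one, zpow_neg, zpow_ofNat]
  field_simp
  ring

theorem ncard_unimodularFinrankEq_of_lt (hv : v ≠ 0) (haM : M < a) :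
    (unimodularFinrankEq M a v).ncard = 0 := by
  rw [Set.ncard_eq_zero (finite_unimodularFinrankEq M a v), Set.eq_empty_iff_forall_notMem]
  rintro c ⟨hlead, hc, rfl⟩
  exact haM.not_ge (finrank_syzygies_le hc hlead hv)

theorem sum_ncard_unimodularFinrankEq (hv : v ≠ 0) :
    ∑ a ∈ Finset.range (M + 1), (unimodularFinrankEq M a v).ncard =
      {c : Fin 3 → F[X] | HasLeadingTerm (2 * M) v c ∧ IsUnimodular c}.ncard := by
  rw [ncard_eq_sum_ncard_fiber
    ((finite_vecLT (Fin 3) F (2 * M + 1)).subset fun c hc => hc.1.mem_vecLT (Nat.lt_succ_self _))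
    (fun c => Module.finrank F (syzygies M c)) (Finset.range (M + 1))
    fun c hc => Finset.mem_range_succ_iff.2 (finrank_syzygies_le hc.2 hc.1 hv)]
  simp only [unimodularFinrankEq, Set.mem_ofPred_eq, and_assoc]

theorem ncard_unimodularFinrankEq (hM : 0 < M) (a : ℕ) (hv : v ≠ 0) :
    ((unimodularFinrankEq M a v).ncard : ℚ) = aNumberDensity (Nat.card F) M a *
      ((Nat.card F : ℚ) ^ (6 * M) * (1 - (Nat.card F : ℚ) ^ (-2 : ℤ))) := by
  obtain haM | haM := lt_or_ge M a
  · rw [ncard_unimodularFinrankEq_of_lt hv haM, aNumberDensity, if_neg (hM.trans haM).ne',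
      if_neg haM.not_gt, if_neg haM.ne', zero_mul, Nat.cast_zero]
  obtain rfl | ha := Nat.eq_zero_or_pos a
  · have htotal := congrArg (Nat.cast (R := ℚ)) (sum_ncard_unimodularFinrankEq (M := M) hv)
    have hdens := sum_aNumberDensity (q := Nat.card F) (Nat.cast_ne_zero.2 Finite.card_pos.ne') hM
    rw [ncard_isUnimodular_hasLeadingTerm _ hv, Fintype.card_fin, if_neg (by lia), Nat.cast_sum,
      Finset.sum_range_succ', Finset.sum_congr rfl fun a ha => ncard_unimodularFinrankEq_of_pos hv
        a.succ_pos (Finset.mem_range.1 ha), ← Finset.sum_mul] at htotal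
    rw [Finset.sum_range_succ'] at hdens
    rw [eq_sub_of_add_eq' hdens, eq_sub_of_add_eq' htotal]
    norm_num
    ring
  · exact ncard_unimodularFinrankEq_of_pos hv ha haM

end FinrankCount

section FrobeniusComb

variable {p : ℕ} {F : Type*} [Field F]

/-- The polynomial with components `c i` in its decomposition `∑ c i ^ p * X ^ i`. -/
noncomputable def frobeniusComb (c : Fin p → F[X]) : F[X] :=
  ∑ i : Fin p, c i ^ p * X ^ (i : ℕ)

theorem frobeniusComb_smul (d : F[X]) (c : Fin p → F[X]) :
    frobeniusComb (d • c) = d ^ p * frobeniusComb c := by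
  simp only [frobeniusComb, Pi.smul_apply, smul_eq_mul, mul_pow, mul_assoc, Finset.mul_sum]

/-- The vectors whose last nonzero entry is a `1` in position `j`. -/
def leadingVecs (F : Type*) [Field F] (j : Fin p) : Set (Fin p → F) :=
  {v | v j = 1 ∧ ∀ i > j, v i = 0}

theorem ne_zero_of_mem_leadingVecs {j : Fin p} {v : Fin p → F} (hv : v ∈ leadingVecs F j) :
    v ≠ 0 := by
  rintro rfl
  exact zero_ne_one hv.1

theorem ncard_leadingVecs (F : Type*) [Field F] (j : Fin p) :
    (leadingVecs F j).ncard = Nat.card F ^ (j : ℕ) := by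
  have hpi : leadingVecs F j = Set.univ.pi fun i =>
      if i < j then Set.univ else {if i = j then 1 else 0} := by
    ext v
    simp only [leadingVecs, Set.mem_ofPred_eq, Set.mem_univ_pi]
    refine ⟨fun h i => ?_, fun h => ⟨by simpa using h j, fun i hi => ?_⟩⟩
    · obtain hi | rfl | hi := lt_trichotomy i j
      · simp [hi]
      · simpa using h.1
      · simpa [hi.not_gt, hi.ne'] using h.2 i hi
    · simpa [hi.not_gt, hi.ne'] using h i
  rw [hpi, ncard_univ_pi]
  simp only [apply_ite Set.ncard, Set.ncard_univ, Set.ncard_singleton]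
  rw [Finset.prod_ite, Finset.prod_const, Finset.prod_const_one, mul_one,
    Finset.filter_gt_eq_Iio, Fin.card_Iio]

variable [ExpChar F p]

theorem coeff_frobeniusComb (c : Fin p → F[X]) (n : ℕ) (i : Fin p) :
    (frobeniusComb c).coeff (p * n + i) = (c i).coeff n ^ p := by
  have hp : 0 < p := expChar_pos F p
  simp only [frobeniusComb, finsetSum_coeff, coeff_mul_X_pow', ← map_frobenius_expand, coeff_map,
    coeff_expand hp]
  rw [Finset.sum_eq_single i]
  · rw [if_pos (Nat.le_add_left _ _), Nat.add_sub_cancel, if_pos (dvd_mul_right p n),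
      Nat.mul_div_cancel_left n hp, frobenius_def]
  · intro j _ hji
    split_ifs with hle hdvd
    · have hmod : (i : ℕ) % p = j % p := by
        rw [← Nat.mul_add_mod p n i]
        exact (Nat.modEq_iff_dvd' hle).2 hdvd |>.symm
      rw [Nat.mod_eq_of_lt i.2, Nat.mod_eq_of_lt j.2] at hmod
      exact absurd (Fin.ext hmod.symm) hji
    · exact map_zero _
    · rfl
  · exact fun h => absurd (Finset.mem_univ i) h

theorem forall_coeff_frobeniusComb_eq_zero_iff (c : Fin p → F[X]) (P : ℕ → Prop) :
    (∀ m, P m → (frobeniusComb c).coeff m = 0) ↔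
      ∀ (n : ℕ) (i : Fin p), P (p * n + i) → (c i).coeff n = 0 := by
  have hp : p ≠ 0 := (expChar_pos F p).ne'
  refine ⟨fun h n i hP => ?_, fun h m hP => ?_⟩
  · rw [← pow_eq_zero_iff hp, ← coeff_frobeniusComb, h _ hP]
  · have hm : p * (m / p) + (⟨m % p, Nat.mod_lt m hp.bot_lt⟩ : Fin p) = m := Nat.div_add_mod m p
    rw [← hm] at hP ⊢
    rw [coeff_frobeniusComb, h _ _ hP, zero_pow hp]

theorem degree_frobeniusComb_lt_iff {M : ℕ} {c : Fin p → F[X]} :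
    (frobeniusComb c).degree < (p * M : ℕ) ↔ c ∈ vecLT (Fin p) F M := by
  simp only [degree_lt_iff_coeff_zero, forall_coeff_frobeniusComb_eq_zero_iff, mem_vecLT_iff]
  refine ⟨fun h i n hn => h n i ?_, fun h n i hn => h i n ?_⟩
  · exact (Nat.mul_le_mul_left p hn).trans (Nat.le_add_right _ _)
  · rw [← Nat.lt_succ_iff]
    exact Nat.lt_of_mul_lt_mul_left (a := p) (by rw [Nat.mul_succ]; lia)

theorem isMonicOfDegree_frobeniusComb_iff {D : ℕ} {j : Fin p} {c : Fin p → F[X]} :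
    IsMonicOfDegree (frobeniusComb c) (p * D + j) ↔
      ∃ v ∈ leadingVecs F j, HasLeadingTerm D v c := by
  have hone : ∀ x : F, x ^ p = 1 ↔ x = 1 := fun x =>
    ⟨fun h => frobenius_inj F p (by simpa [frobenius_def] using h), by rintro rfl; exact one_pow p⟩
  rw [isMonicOfDegree_iff, coeff_frobeniusComb, hone, natDegree_le_iff_coeff_eq_zero,
    forall_coeff_frobeniusComb_eq_zero_iff]
  constructor
  · rintro ⟨hzero, hj⟩
    refine ⟨fun i => (c i).coeff D, ⟨hj, fun i hi => hzero D i (by simpa using hi)⟩,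
      fun i => ⟨?_, rfl⟩⟩
    refine natDegree_le_iff_coeff_eq_zero.2 fun n hn => hzero n i ?_
    have := Nat.mul_le_mul_left p hn
    rw [Nat.mul_succ] at this
    lia
  · rintro ⟨v, ⟨hj, hv⟩, hlead⟩
    refine ⟨fun n i hn => ?_, (hlead j).2.trans hj⟩
    obtain hnD | rfl | hnD := lt_trichotomy n D
    · have := Nat.mul_le_mul_left p hnD
      rw [Nat.mul_succ] at this
      lia
    · rw [(hlead i).2]
      exact hv i (by simpa using hn)
    · exact coeff_eq_zero_of_natDegree_lt ((hlead i).1.trans_lt hnD)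

theorem frobeniusComb_injective : Function.Injective (frobeniusComb : (Fin p → F[X]) → F[X]) :=
  fun c d h => funext fun i => Polynomial.ext fun n => frobenius_inj F p <| by
    rw [frobenius_def, frobenius_def, ← coeff_frobeniusComb, ← coeff_frobeniusComb, h]

variable [PerfectRing F p]

theorem frobeniusComb_surjective :
    Function.Surjective (frobeniusComb : (Fin p → F[X]) → F[X]) := by
  intro f
  induction f using Polynomial.induction_on' with
  | add f g hf hg =>
    obtain ⟨c, rfl⟩ := hf
    obtain ⟨d, rfl⟩ := hg
    exact ⟨c + d, by simp [frobeniusComb, add_pow_expChar, add_mul, Finset.sum_add_distrib]⟩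
  | monomial m a =>
    have hp := expChar_pos F p
    refine ⟨Pi.single ⟨m % p, Nat.mod_lt m hp⟩
      (monomial (m / p) ((frobeniusEquiv F p).symm a)), ?_⟩
    rw [frobeniusComb, Finset.sum_eq_single ⟨m % p, Nat.mod_lt m hp⟩]
    · rw [Pi.single_eq_same, monomial_pow, frobeniusEquiv_symm_pow_p, monomial_mul_X_pow,
        Nat.div_add_mod']
    · intro i _ hi
      rw [Pi.single_eq_of_ne hi, zero_pow hp.ne', zero_mul]
    · exact fun h => absurd (Finset.mem_univ _) h

theorem pow_dvd_frobeniusComb_iff {d : F[X]} {c : Fin p → F[X]} :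
    d ^ p ∣ frobeniusComb c ↔ ∀ i, d ∣ c i := by
  refine ⟨fun ⟨f, hf⟩ i => ?_, fun h => ?_⟩
  · obtain ⟨b, rfl⟩ := frobeniusComb_surjective (p := p) f
    rw [← frobeniusComb_smul] at hf
    exact ⟨b i, congrFun (frobeniusComb_injective hf) i⟩
  · choose b hb using h
    obtain rfl : c = d • b := funext hb
    exact ⟨_, frobeniusComb_smul d b⟩

theorem forall_not_pow_dvd_frobeniusComb_iff {c : Fin p → F[X]} :
    (∀ d : F[X], 0 < d.degree → ¬ d ^ p ∣ frobeniusComb c) ↔ IsUnimodular c := by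
  simp only [pow_dvd_frobeniusComb_iff, isUnimodular_iff_forall_dvd_isUnit]
  refine ⟨fun h d hd => ?_, fun h d hd hdvd => ?_⟩
  · have hd0 : d ≠ 0 := by
      rintro rfl
      exact h X (by simp) fun i => (dvd_zero X).trans (hd i)
    rw [isUnit_iff_degree_eq_zero]
    exact le_antisymm (not_lt.1 fun hdeg => h d hdeg hd) (zero_le_degree_iff.2 hd0)
  · exact hd.ne' (degree_eq_zero_of_isUnit (h d hdvd))

end FrobeniusComb

section CharThree

variable {F : Type*} [Field F]

/-- The polynomials `Q` of degree less than `g` with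
`c₂(Q) c₀(f) + c₁(Q) c₁(f) + c₀(Q) c₂(f) = 0`, whose dimension is the `a`-number of `f`. -/
def cartierKernel (g : ℕ) (f : F[X]) : Set F[X] :=
  {Q | Q.degree < (g : WithBot ℕ) ∧ ∃ Q0 Q1 Q2 c0 c1 c2 : F[X],
    f = c0 ^ 3 + c1 ^ 3 * X + c2 ^ 3 * X ^ 2 ∧ Q = Q0 ^ 3 + Q1 ^ 3 * X + Q2 ^ 3 * X ^ 2 ∧
    Q2 * c0 + Q1 * c1 + Q0 * c2 = 0}

/-- The monic cubefree polynomials of degree `n` with `a`-number `a` in genus `g`. -/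
def cubefreeANumberEq (n g a : ℕ) : Set F[X] :=
  {f | f.Monic ∧ f.natDegree = n ∧ (∀ d : F[X], 0 < d.degree → ¬ d ^ 3 ∣ f) ∧
    Nat.card (cartierKernel g f) = Nat.card F ^ a}

variable {g M a : ℕ} {j : Fin 3} {v : Fin 3 → F} {c Q : Fin 3 → F[X]}

theorem comp_rev_mem_vecLT_iff : Q ∘ Fin.rev ∈ vecLT (Fin 3) F M ↔ Q ∈ vecLT (Fin 3) F M := by
  simp only [mem_vecLT_iff, Function.comp_apply]
  exact ⟨fun h i => by simpa using h i.rev, fun h i => h i.rev⟩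

theorem coeff_zero_eq_zero_of_mem_syzygies (hv : v ∈ leadingVecs F 0) {D : ℕ}
    (hlead : HasLeadingTerm D v c) (hQ : Q ∈ syzygies (M + 1) c) : (Q 0).coeff M = 0 := by
  obtain ⟨hQlt, hdot⟩ := mem_syzygies.1 hQ
  have hQlead : HasLeadingTerm M (fun i => (Q i).coeff M) Q := fun i =>
    ⟨natDegree_le_iff_coeff_eq_zero.2 fun n hn =>
      (degree_lt_iff_coeff_zero _ _).1 (mem_vecLT_iff.1 hQlt i) n hn, rfl⟩
  have hzero := hlead.coeff_dotProduct hQlead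
  rw [hdot, coeff_zero, dotProduct, Fin.sum_univ_three, hv.1, hv.2 1 (by decide),
    hv.2 2 (by decide)] at hzero
  simpa using hzero.symm

theorem ncard_exists_mem_unimodularFinrankEq [Finite F] (hM : 0 < M) (a : ℕ) (j : Fin 3) :
    ({c : Fin 3 → F[X] | ∃ v ∈ leadingVecs F j, c ∈ unimodularFinrankEq M a v}.ncard : ℚ) =
      Nat.card F ^ (j : ℕ) * (aNumberDensity (Nat.card F) M a *
        ((Nat.card F : ℚ) ^ (6 * M) * (1 - (Nat.card F : ℚ) ^ (-2 : ℤ)))) := by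
  rw [ncard_eq_ncard_mul_of_fiber (s := {c | ∃ v ∈ leadingVecs F j, c ∈ unimodularFinrankEq M a v})
    ((finite_vecLT (Fin 3) F (2 * M + 1)).subset ?_) (Set.toFinite (leadingVecs F j))
    (fun c i => (c i).coeff (2 * M)) ?_ fun v hv => ?_, ncard_leadingVecs, Nat.cast_pow]
  · rintro c ⟨v, -, hlead, -⟩
    exact hlead.mem_vecLT (Nat.lt_succ_self _)
  · rintro c ⟨v, hv, hlead, -⟩
    rwa [← hlead.eq_coeff]
  · rw [← ncard_unimodularFinrankEq hM a (ne_zero_of_mem_leadingVecs hv)]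
    congr 2
    ext c
    constructor
    · rintro ⟨⟨w, -, hc⟩, rfl⟩
      exact hc.1.eq_coeff ▸ hc
    · exact fun hc => ⟨⟨v, hv, hc⟩, hc.1.eq_coeff.symm⟩

variable [CharP F 3]

theorem degree_frobeniusComb_rev_lt_iff (hg : g = 3 * M ∨ g + 1 = 3 * M ∧ j = 0)
    (hv : v ∈ leadingVecs F j) {D : ℕ} (hlead : HasLeadingTerm D v c) (hdot : c ⬝ᵥ Q = 0) :
    (frobeniusComb (Q ∘ Fin.rev)).degree < (g : WithBot ℕ) ↔ Q ∈ vecLT (Fin 3) F M := by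
  rw [← comp_rev_mem_vecLT_iff, ← degree_frobeniusComb_lt_iff]
  obtain rfl | ⟨hg, rfl⟩ := hg
  · rfl
  refine ⟨fun h => h.trans_le (by exact_mod_cast (Nat.le_succ g).trans_eq hg), fun h => ?_⟩
  obtain _ | N := M
  · lia
  obtain rfl : g = 3 * N + 2 := by lia
  have hQ := mem_syzygies.2
    ⟨comp_rev_mem_vecLT_iff.1 (degree_frobeniusComb_lt_iff.1 h), hdot⟩
  rw [degree_lt_iff_coeff_zero] at h ⊢
  intro m hm
  obtain rfl | hm := hm.eq_or_lt
  · rw [show 3 * N + 2 = 3 * N + (2 : Fin 3) from rfl, coeff_frobeniusComb]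
    change (Q 0).coeff N ^ 3 = 0
    rw [coeff_zero_eq_zero_of_mem_syzygies hv hlead hQ, zero_pow three_ne_zero]
  · exact h m (by lia)

theorem frobeniusComb_eq_iff {c0 c1 c2 : F[X]} :
    frobeniusComb c = c0 ^ 3 + c1 ^ 3 * X + c2 ^ 3 * X ^ 2 ↔ c 0 = c0 ∧ c 1 = c1 ∧ c 2 = c2 := by
  have hcomb : frobeniusComb ![c0, c1, c2] = c0 ^ 3 + c1 ^ 3 * X + c2 ^ 3 * X ^ 2 := by
    simp [frobeniusComb, Fin.sum_univ_three]
  rw [← hcomb, frobeniusComb_injective.eq_iff]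
  simp [funext_iff, Fin.forall_fin_succ]

theorem frobeniusComb_rev_mem_cartierKernel_iff :
    frobeniusComb (Q ∘ Fin.rev) ∈ cartierKernel g (frobeniusComb c) ↔
      (frobeniusComb (Q ∘ Fin.rev)).degree < (g : WithBot ℕ) ∧ c ⬝ᵥ Q = 0 := by
  have hdot : c ⬝ᵥ Q = Q 0 * c 0 + Q 1 * c 1 + Q 2 * c 2 := by
    rw [dotProduct_comm, dotProduct, Fin.sum_univ_three]
  simp only [cartierKernel, Set.mem_ofPred_eq, frobeniusComb_eq_iff, hdot]
  refine and_congr_right fun _ => ⟨?_, fun h => ?_⟩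
  · rintro ⟨_, _, _, _, _, _, ⟨rfl, rfl, rfl⟩, ⟨rfl, rfl, rfl⟩, h⟩
    exact h
  · exact ⟨_, _, _, _, _, _, ⟨rfl, rfl, rfl⟩, ⟨rfl, rfl, rfl⟩, h⟩

variable [Finite F]

theorem card_cartierKernel_frobeniusComb (hg : g = 3 * M ∨ g + 1 = 3 * M ∧ j = 0)
    (hv : v ∈ leadingVecs F j) {D : ℕ} (hlead : HasLeadingTerm D v c) :
    Nat.card (cartierKernel g (frobeniusComb c)) =
      Nat.card F ^ Module.finrank F (syzygies M c) := by
  have hbij : Function.Bijective fun Q : Fin 3 → F[X] => frobeniusComb (Q ∘ Fin.rev) :=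
    Function.Bijective.comp (g := frobeniusComb)
      ⟨frobeniusComb_injective, frobeniusComb_surjective⟩ Fin.rev_involutive.bijective.comp_right
  rw [← Module.natCard_eq_pow_finrank]
  refine (Nat.card_congr ((Equiv.ofBijective _ hbij).subtypeEquiv fun Q => ?_)).symm
  rw [Equiv.ofBijective_apply, frobeniusComb_rev_mem_cartierKernel_iff, mem_syzygies]
  exact and_congr_left fun hdot => (degree_frobeniusComb_rev_lt_iff hg hv hlead hdot).symm

theorem frobeniusComb_mem_cubefreeANumberEq_iff (hg : g = 3 * M ∨ g + 1 = 3 * M ∧ j = 0) :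
    frobeniusComb c ∈ cubefreeANumberEq (6 * M + j) g a ↔
      ∃ v ∈ leadingVecs F j, c ∈ unimodularFinrankEq M a v := by
  have hdeg : (frobeniusComb c).Monic ∧ (frobeniusComb c).natDegree = 6 * M + j ↔
      ∃ v ∈ leadingVecs F j, HasLeadingTerm (2 * M) v c := by
    rw [← isMonicOfDegree_frobeniusComb_iff, ← mul_assoc]
    exact ⟨fun h => ⟨h.2, h.1⟩, fun h => ⟨h.2, h.1⟩⟩
  have hcard : ∀ v ∈ leadingVecs F j, HasLeadingTerm (2 * M) v c →
      (Nat.card (cartierKernel g (frobeniusComb c)) = Nat.card F ^ a ↔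
        Module.finrank F (syzygies M c) = a) := fun v hv hlead => by
    rw [card_cartierKernel_frobeniusComb hg hv hlead]
    exact (Nat.pow_right_injective Finite.one_lt_card).eq_iff
  constructor
  · rintro ⟨hmonic, hnat, hfree, ha⟩
    obtain ⟨v, hv, hlead⟩ := hdeg.1 ⟨hmonic, hnat⟩
    exact ⟨v, hv, hlead, forall_not_pow_dvd_frobeniusComb_iff.1 hfree, (hcard v hv hlead).1 ha⟩
  · rintro ⟨v, hv, hlead, hunimod, ha⟩
    obtain ⟨hmonic, hnat⟩ := hdeg.2 ⟨v, hv, hlead⟩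
    exact ⟨hmonic, hnat, forall_not_pow_dvd_frobeniusComb_iff.2 hunimod, (hcard v hv hlead).2 ha⟩

theorem ncard_cubefreeANumberEq (hM : 0 < M) (hg : g = 3 * M ∨ g + 1 = 3 * M ∧ j = 0) (a : ℕ) :
    ((cubefreeANumberEq (6 * M + j) g a : Set F[X]).ncard : ℚ) =
      Nat.card F ^ (j : ℕ) * (aNumberDensity (Nat.card F) M a *
        ((Nat.card F : ℚ) ^ (6 * M) * (1 - (Nat.card F : ℚ) ^ (-2 : ℤ)))) := by
  have hrange : cubefreeANumberEq (6 * M + j) g a ⊆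
      Set.range (frobeniusComb : (Fin 3 → F[X]) → F[X]) := by
    rw [frobeniusComb_surjective.range_eq]
    exact Set.subset_univ _
  rw [← ncard_exists_mem_unimodularFinrankEq hM a j,
    ← Set.ncard_preimage_of_injective_subset_range frobeniusComb_injective hrange]
  congr 2
  ext c
  exact frobeniusComb_mem_cubefreeANumberEq_iff hg

end CharThree

end ANumber

/-- Exact proportions of `a`-numbers of monic cubefree polynomials in characteristic 3,
for `g ≡ 0 (mod 3)`, `g ≥ 3`, `ε ∈ {1,2}`, or `g ≡ 2 (mod 3)`, `ε = 2`.  The `a`-number of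
`f` is the `𝔽_q`-dimension of the space of polynomials `Q = Q₀³ + Q₁³X + Q₂³X²` of degree
`< g` with `Q₂c₀(f) + Q₁c₁(f) + Q₀c₂(f) = 0`; having `a`-number `a` is expressed by this
solution space having exactly `q^a` elements.  The proportion `μ_{ε,g}(a)` (with denominator
`q^{2g+ε}(1-q⁻²)`, the number of monic cubefree polynomials of degree `2g+ε`) equals
`1 - q⁻¹` if `a = 0`; `q^{-2a+1}(1-q⁻²)` if `0 < a < ⌊(g+1)/3⌋`; `q^{-2a+1}` if
`a = ⌊(g+1)/3⌋`; and `0` if `a > ⌊(g+1)/3⌋`. -/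
theorem proportion_aNumber_cubefree {F : Type*} [Field F] [Fintype F] [CharP F 3]
    (q g ε a : ℕ) (hq : Fintype.card F = q)
    (hgε : (g % 3 = 0 ∧ 3 ≤ g ∧ (ε = 1 ∨ ε = 2)) ∨ (g % 3 = 2 ∧ ε = 2)) :
    (Nat.card {f : F[X] // f.Monic ∧ f.natDegree = 2 * g + ε ∧
        (∀ p : F[X], 0 < p.degree → ¬ p ^ 3 ∣ f) ∧
        Nat.card {Q : F[X] // Q.degree < (g : WithBot ℕ) ∧
          ∃ Q0 Q1 Q2 c0 c1 c2 : F[X],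
            f = c0 ^ 3 + c1 ^ 3 * X + c2 ^ 3 * X ^ 2 ∧
            Q = Q0 ^ 3 + Q1 ^ 3 * X + Q2 ^ 3 * X ^ 2 ∧
            Q2 * c0 + Q1 * c1 + Q0 * c2 = 0} = q ^ a} : ℚ) =
      (if a = 0 then 1 - (q : ℚ)⁻¹
       else if a < (g + 1) / 3 then (q : ℚ) ^ (1 - 2 * (a : ℤ)) * (1 - (q : ℚ) ^ (-2 : ℤ))
       else if a = (g + 1) / 3 then (q : ℚ) ^ (1 - 2 * (a : ℤ))
       else 0) *
      ((q : ℚ) ^ (2 * g + ε) * (1 - (q : ℚ) ^ (-2 : ℤ))) := by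
  obtain ⟨M, j, hM, hg, hn⟩ : ∃ (M : ℕ) (j : Fin 3), 0 < M ∧
      (g = 3 * M ∨ g + 1 = 3 * M ∧ j = 0) ∧ 2 * g + ε = 6 * M + j := by
    obtain ⟨h, h3, rfl | rfl⟩ | ⟨h, rfl⟩ := hgε
    · exact ⟨g / 3, 1, by lia, by lia, by rw [Fin.val_one]; lia⟩
    · exact ⟨g / 3, 2, by lia, by lia, by rw [Fin.val_two]; lia⟩
    · exact ⟨(g + 1) / 3, 0, by lia, Or.inr ⟨by lia, rfl⟩, by rw [Fin.val_zero]; lia⟩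
  obtain rfl : M = (g + 1) / 3 := by lia
  rw [Fintype.card_eq_nat_card] at hq
  have h := ANumber.ncard_cubefreeANumberEq (F := F) hM hg a
  rw [mul_left_comm, ← mul_assoc (_ ^ (j : ℕ)), ← pow_add, add_comm (j : ℕ), ← hn,
    ← Nat.card_coe_set_eq] at h
  subst hq
  exact h
end
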